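/- arXiv:2306.09543 — 4 statements merged into one kernel-verified Lean document; each statement's English description precedes it below -/
import Mathlib

section
/- Consider the set of pairs (σ₀, σ₁) of permutations of Fin 12 such that the subgroup generated by σ₀ and σ₁ acts transitively, the cycle type of σ₀ consists of 6 copies of 2 (six disjoint transpositions), the cycle type of σ₁ consists of 3 copies of 4 (three disjoint 4-cycles), σ₁σ₀ is a single 12-cycle (cycle type {12}), and the cycle type of σ₁²σ₀ is {6, 6}. Declare two such pairs equivalent if they are simultaneously conjugate by a permutation of Fin 12. Then there is exactly one equivalence class. -/
/-- The monodromy pairs of uniform dessins of type (2,4,12) and genus 2 whose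
associated uniform filling multicurve is a single filling curve: transitive
pairs on 12 points with six transpositions, three 4-cycles, a single 12-cycle
face, and σ₁²σ₀ a product of two disjoint 6-cycles. -/
def IsType2412FillingCurvePair
    (p : Equiv.Perm (Fin 12) × Equiv.Perm (Fin 12)) : Prop :=
  (∀ x y : Fin 12,
    ∃ π ∈ Subgroup.closure ({p.1, p.2} : Set (Equiv.Perm (Fin 12))), π x = y) ∧
  p.1.cycleType = Multiset.replicate 6 2 ∧
  p.2.cycleType = Multiset.replicate 3 4 ∧
  (p.2 * p.1).cycleType = {12} ∧
  (p.2 ^ 2 * p.1).cycleType = {6, 6}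

/-- Simultaneous conjugacy of monodromy pairs. -/
def SimConj2412 (p q : {p // IsType2412FillingCurvePair p}) : Prop :=
  ∃ π : Equiv.Perm (Fin 12),
    q.1.1 = π * p.1.1 * π⁻¹ ∧ q.1.2 = π * p.1.2 * π⁻¹

/-!
Let `a` reverse the edges and `b` rotate around the vertices. Going straight across a vertex is the
involution `b ^ 2`, and since neither `a` nor `b ^ 2` has a fixed point and `b ^ 2 * a` consists of
two `2n`-cycles, the darts form a torsor under the dihedral group generated by `a` and `b ^ 2`.
What remains of the pair is a signed Gauss diagram: a pairing of the `2n` passes of the curve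
through its double points, with a sign for each pair.

For three double points, a chord joining consecutive passes would create a face with one side. The
parity of the number of passes then forces a chord joining opposite passes, and moving the base
point to it leaves two pairings with four choices of signs each. All but two of these eight diagrams
contain a face with two sides, and reversing the direction of the curve exchanges those two. A
single face with twelve sides excludes faces with one or two sides, and conversely the diagram that
is left has only one face.
-/

open Equiv Equiv.Perm DihedralGroup

namespace FillingCurve

section CycleType

variable {X Y : Type*} [Fintype X] [DecidableEq X] [Fintype Y] [DecidableEq Y]

theorem pow_apply_eq_pow_apply_of_cycleType_eq_replicate {σ : Perm X} {m n : ℕ}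
    (hσ : σ.cycleType = Multiset.replicate m n) (hX : m * n = Fintype.card X) (k l : ℕ) (x : X) :
    (σ ^ k) x = (σ ^ l) x ↔ k ≡ l [MOD n] := by
  have hsupport : σ.support = Finset.univ := by
    rw [← Finset.card_eq_iff_eq_univ, ← sum_cycleType, hσ, Multiset.sum_replicate, smul_eq_mul, hX]
  have hx : x ∈ σ.support := hsupport ▸ Finset.mem_univ x
  have hcard : (σ.cycleOf x).support.card = n := by
    refine Multiset.eq_of_mem_replicate (n := m) (hσ ▸ ?_)
    rw [cycleType_def]
    exact Multiset.mem_map_of_mem _ (cycleOf_mem_cycleFactorsFinset_iff.2 hx)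
  rw [(σ.isCycleOn_support_cycleOf x).pow_apply_eq_pow_apply
    (mem_support_cycleOf_iff.2 ⟨SameCycle.refl _ _, hx⟩), hcard]

theorem pow_apply_eq_self_iff_of_cycleType_eq_replicate {σ : Perm X} {m n : ℕ}
    (hσ : σ.cycleType = Multiset.replicate m n) (hX : m * n = Fintype.card X) (k : ℕ) (x : X) :
    (σ ^ k) x = x ↔ n ∣ k := by
  simpa [Nat.modEq_zero_iff_dvd] using
    pow_apply_eq_pow_apply_of_cycleType_eq_replicate hσ hX k 0 x

theorem pow_eq_one_of_cycleType_eq_replicate {σ : Perm X} {m n : ℕ}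
    (hσ : σ.cycleType = Multiset.replicate m n) (hX : m * n = Fintype.card X) : σ ^ n = 1 :=
  Perm.ext fun x => (pow_apply_eq_self_iff_of_cycleType_eq_replicate hσ hX n x).2 dvd_rfl

theorem cycleType_permCongr (e : X ≃ Y) (σ : Perm X) :
    (e.permCongr σ).cycleType = σ.cycleType := by
  rw [← cycleType_extendDomain (e.trans (subtypeUnivEquiv fun _ => trivial).symm)]
  congr 1

theorem exists_pow_apply_eq_of_cycleType_eq_singleton {σ : Perm X}
    (hσ : σ.cycleType = {Fintype.card X}) (x y : X) : ∃ k : ℕ, (σ ^ k) x = y := by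
  have hcycle : σ.IsCycle := card_cycleType_eq_one.1 (by rw [hσ, Multiset.card_singleton])
  have hsupport : σ.support = Finset.univ := by
    rw [← Finset.card_eq_iff_eq_univ, ← sum_cycleType, hσ, Multiset.sum_singleton]
  have hmoved (z : X) : σ z ≠ z := mem_support.1 (hsupport ▸ Finset.mem_univ z)
  exact hcycle.exists_pow_eq (hmoved x) (hmoved y)

end CycleType

section DihedralTorsor

variable {X : Type*} {a c : Perm X}

/- In the dihedral group generated by `a` and `c`, the reflection `c * (c * a) ^ k` is conjugate
to `c` or to `a`, according to the parity of `k`. -/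
theorem apply_ne_mul_pow_apply (ha : a * a = 1) (hc : c * c = 1) (ha_ne : ∀ x, a x ≠ x)
    (hc_ne : ∀ x, c x ≠ x) (k : ℕ) (x : X) : c x ≠ ((c * a) ^ k) x := by
  induction k using Nat.twoStepInduction generalizing x with
  | zero => exact hc_ne x
  | one => exact fun h => ha_ne x (c.injective h.symm)
  | more k ih _ =>
    intro h
    have hconj : c * (c * a) = (c * a)⁻¹ * c := by
      rw [mul_inv_rev, inv_eq_of_mul_eq_one_left ha, inv_eq_of_mul_eq_one_left hc, mul_assoc, hc,
        ← mul_assoc, hc, one_mul, mul_one]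
    refine ih ((c * a) x) ((c * a).injective ?_)
    calc (c * a) (c ((c * a) x)) = ((c * a) * (c * (c * a))) x := rfl
      _ = c x := by rw [hconj, mul_inv_cancel_left]
      _ = ((c * a) ^ (k + 2)) x := h
      _ = (c * a) (((c * a) ^ k) ((c * a) x)) := by
        rw [pow_succ, pow_succ', mul_apply, mul_apply]

/-- The orbit map `g ↦ g • x` of the action of the dihedral group in which the reflections `sr 0`
and `sr 1` act as the involutions `c` and `a`, so that the rotation `r 1` acts as `c * a`. -/
def dihedralOrbitMap (n : ℕ) (a c : Perm X) (x : X) : DihedralGroup n → X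
  | r i => ((c * a) ^ i.val) x
  | sr i => c (((c * a) ^ i.val) x)

variable {n : ℕ} {x : X}

theorem apply_dihedralOrbitMap_right (hc : c * c = 1) (g : DihedralGroup n) :
    c (dihedralOrbitMap n a c x g) = dihedralOrbitMap n a c x (sr 0 * g) := by
  rcases g with i | i
  · rw [sr_mul_r, zero_add]; rfl
  · rw [sr_mul_sr, sub_zero]
    exact DFunLike.congr_fun hc _

theorem apply_dihedralOrbitMap_left [NeZero n] (ha : a * a = 1) (hc : c * c = 1)
    (hpow : (c * a) ^ n = 1) (g : DihedralGroup n) :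
    a (dihedralOrbitMap n a c x g) = dihedralOrbitMap n a c x (sr 1 * g) := by
  have hsucc (i : ZMod n) : (c * a) ^ (1 + i).val = c * a * (c * a) ^ i.val := by
    rw [ZMod.val_add, ZMod.val_one_eq_one_mod, Nat.mod_add_mod, ← pow_eq_pow_mod _ hpow, pow_add,
      pow_one]
  have hrot (i : ZMod n) :
      a (dihedralOrbitMap n a c x (r i)) = dihedralOrbitMap n a c x (sr (1 + i)) := by
    simp only [dihedralOrbitMap, hsucc, ← mul_apply]
    rw [← mul_assoc, ← mul_assoc, hc, one_mul]
  rcases g with i | i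
  · exact hrot i
  · rw [← add_sub_cancel 1 i, ← hrot, ← mul_apply, ha, sr_mul_sr, add_sub_cancel]
    rfl

theorem dihedralOrbitMap_injective [NeZero n] (ha : a * a = 1) (hc : c * c = 1)
    (ha_ne : ∀ x, a x ≠ x) (hc_ne : ∀ x, c x ≠ x)
    (hperiod : ∀ k l, ((c * a) ^ k) x = ((c * a) ^ l) x ↔ k ≡ l [MOD n]) :
    Function.Injective (dihedralOrbitMap n a c x) := by
  have hrot {i j : ZMod n} (h : ((c * a) ^ i.val) x = ((c * a) ^ j.val) x) : i = j :=
    ZMod.val_injective n (((hperiod _ _).1 h).eq_of_lt_of_lt i.val_lt j.val_lt)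
  have hrefl (i j : ZMod n) : c (((c * a) ^ j.val) x) ≠ ((c * a) ^ i.val) x := by
    have hi : ((c * a) ^ (i.val + (n - j.val) + j.val)) x = ((c * a) ^ i.val) x := by
      rw [hperiod, add_assoc, Nat.sub_add_cancel j.val_lt.le]
      exact Nat.add_modEq_right
    rw [← hi, pow_add, mul_apply]
    exact apply_ne_mul_pow_apply ha hc ha_ne hc_ne _ _
  rintro (i | i) (j | j) h
  · exact congrArg r (hrot h)
  · exact absurd h.symm (hrefl i j)
  · exact absurd h (hrefl j i)
  · exact congrArg sr (hrot (c.injective h))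

theorem exists_equiv_dihedralGroup [Fintype X] [DecidableEq X] [NeZero n]
    (ha : a * a = 1) (hc : c * c = 1) (ha_ne : ∀ x, a x ≠ x) (hc_ne : ∀ x, c x ≠ x)
    (hca : (c * a).cycleType = {n, n}) (hX : Fintype.card X = 2 * n) :
    ∃ e : DihedralGroup n ≃ X,
      e.permCongr (Equiv.mulLeft (sr 1)) = a ∧ e.permCongr (Equiv.mulLeft (sr 0)) = c := by
  obtain ⟨x⟩ : Nonempty X := Fintype.card_pos_iff.1 (by have := NeZero.pos n; lia)
  have hca' : (c * a).cycleType = Multiset.replicate 2 n := hca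
  have hbij : Function.Bijective (dihedralOrbitMap n a c x) :=
    (Fintype.bijective_iff_injective_and_card _).2 ⟨dihedralOrbitMap_injective ha hc ha_ne hc_ne
      fun k l => pow_apply_eq_pow_apply_of_cycleType_eq_replicate hca' hX.symm k l x,
      DihedralGroup.card.trans hX.symm⟩
  let e := Equiv.ofBijective _ hbij
  have hpow : (c * a) ^ n = 1 := pow_eq_one_of_cycleType_eq_replicate hca' hX.symm
  refine ⟨e, Perm.ext fun y => ?_, Perm.ext fun y => ?_⟩ <;> obtain ⟨g, rfl⟩ := e.surjective y <;>
    rw [permCongr_apply, symm_apply_apply]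
  · exact (apply_dihedralOrbitMap_left ha hc hpow g).symm
  · exact (apply_dihedralOrbitMap_right hc g).symm

end DihedralTorsor

section Chords

variable {m : ℕ} {β : Perm (DihedralGroup m)}

/-- `β` is the rotation around the vertices of a closed curve without complementary monogons or
bigons that passes `m` times through its double points. The `i`-th pass leaves its vertex along the
dart `r i` and arrives along `sr i`, so left multiplication by `sr 0` goes straight across a vertex
and left multiplication by `sr 1` goes to the other end of an edge. The faces are then the cycles of
`g ↦ β (sr 1 * g)`. -/
structure IsTautRotation (β : Perm (DihedralGroup m)) : Prop where
  apply_apply : ∀ g, β (β g) = sr 0 * g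
  face_face_ne : ∀ g, β (sr 1 * β (sr 1 * g)) ≠ g

/-- Passes `i` and `j` go through the same double point; in the Gauss diagram of the curve they are
joined by a chord. -/
def Chord (β : Perm (DihedralGroup m)) (i j : ZMod m) : Prop :=
  β (r i) = r j ∨ β (r i) = sr j

theorem exists_chord (β : Perm (DihedralGroup m)) (i : ZMod m) : ∃ j, Chord β i j := by
  rcases h : β (r i) with j | j
  · exact ⟨j, .inl h⟩
  · exact ⟨j, .inr h⟩

theorem Chord.eq_of_right {i j k : ZMod m} (hj : Chord β i j) (hk : Chord β i k) : j = k := by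
  rcases hj with hj | hj <;> rcases hk with hk | hk <;> simpa using hj.symm.trans hk

/-- The rotation `β` with its darts relabelled by `g ↦ g * h⁻¹`; right multiplications are the
relabellings that commute with `Equiv.mulLeft (sr 0)` and `Equiv.mulLeft (sr 1)`. -/
def relabel (h : DihedralGroup m) (β : Perm (DihedralGroup m)) : Perm (DihedralGroup m) :=
  (Equiv.mulRight h⁻¹).permCongr β

theorem relabel_apply (h : DihedralGroup m) (β : Perm (DihedralGroup m)) (g : DihedralGroup m) :
    relabel h β g = β (g * h) * h⁻¹ := by
  simp [relabel]

theorem relabel_relabel (h k : DihedralGroup m) (β : Perm (DihedralGroup m)) :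
    relabel h (relabel k β) = relabel (h * k) β :=
  Perm.ext fun g => by simp only [relabel_apply, mul_inv_rev, mul_assoc]

theorem permCongr_mulRight_trans_relabel {X : Type*} (e : DihedralGroup m ≃ X)
    (h : DihedralGroup m) (β : Perm (DihedralGroup m)) :
    ((Equiv.mulRight h).trans e).permCongr (relabel h β) = e.permCongr β :=
  Perm.ext fun x => by simp [relabel_apply]

theorem permCongr_mulRight_trans_mulLeft {X : Type*} (e : DihedralGroup m ≃ X)
    (h k : DihedralGroup m) :
    ((Equiv.mulRight h).trans e).permCongr (Equiv.mulLeft k) = e.permCongr (Equiv.mulLeft k) :=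
  Perm.ext fun x => by simp [mul_assoc]

theorem isTautRotation_relabel (hβ : IsTautRotation β) (h : DihedralGroup m) :
    IsTautRotation (relabel h β) where
  apply_apply g := by
    simp only [relabel_apply, inv_mul_cancel_right, hβ.apply_apply, ← mul_assoc,
      mul_inv_cancel_right]
  face_face_ne g hg := hβ.face_face_ne (g * h) <| by
    simpa only [relabel_apply, mul_inv_eq_iff_eq_mul, mul_assoc, inv_mul_cancel, mul_one] using hg

namespace IsTautRotation

theorem apply_r_of_apply_r (hβ : IsTautRotation β) {i j : ZMod m} (h : β (r i) = r j) :
    β (r j) = sr i ∧ β (sr i) = sr j ∧ β (sr j) = r i := by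
  have h₁ : β (r j) = sr i := by rw [← h, hβ.apply_apply, sr_mul_r, zero_add]
  have h₂ : β (sr i) = sr j := by rw [← h₁, hβ.apply_apply, sr_mul_r, zero_add]
  exact ⟨h₁, h₂, by rw [← h₂, hβ.apply_apply, sr_mul_sr, sub_zero]⟩

theorem apply_r_of_apply_sr (hβ : IsTautRotation β) {i j : ZMod m} (h : β (r i) = sr j) :
    β (r j) = r i ∧ β (sr i) = r j ∧ β (sr j) = sr i := by
  have h₁ : β (sr j) = sr i := by rw [← h, hβ.apply_apply, sr_mul_r, zero_add]
  have h₂ : β (sr i) = r j := by rw [← h₁, hβ.apply_apply, sr_mul_sr, sub_zero]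
  exact ⟨by rw [← h₂, hβ.apply_apply, sr_mul_sr, sub_zero], h₂, h₁⟩

theorem chord_symm (hβ : IsTautRotation β) {i j : ZMod m} (h : Chord β i j) : Chord β j i := by
  rcases h with h | h
  · exact .inr (hβ.apply_r_of_apply_r h).1
  · exact .inl (hβ.apply_r_of_apply_sr h).1

theorem not_chord_self (hβ : IsTautRotation β) (i : ZMod m) : ¬ Chord β i i := by
  rintro (h | h)
  · simpa [h] using (hβ.apply_r_of_apply_r h).1
  · simpa [h] using (hβ.apply_r_of_apply_sr h).1

theorem face_ne (hβ : IsTautRotation β) (g : DihedralGroup m) : β (sr 1 * g) ≠ g :=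
  fun h => hβ.face_face_ne g (by rw [h, h])

theorem not_chord_add_one (hβ : IsTautRotation β) (i : ZMod m) : ¬ Chord β i (1 + i) := by
  rintro (h | h)
  · exact hβ.face_ne (r i) (by rw [sr_mul_r, (hβ.apply_r_of_apply_r h).2.2])
  · exact hβ.face_ne (sr (1 + i)) (by rw [sr_mul_sr, add_sub_cancel_left, h])

theorem not_face_apply_eq (hβ : IsTautRotation β) {g h : DihedralGroup m} (hg : β (sr 1 * g) = h) :
    β (sr 1 * h) ≠ g :=
  hg ▸ hβ.face_face_ne g

end IsTautRotation

end Chords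

section ThreeCrossings

variable {β : Perm (DihedralGroup 6)}

/-- The rotation around the vertices of the curve with Gauss word `0 1 2 0 2 1`. -/
def standardRotation : Perm (DihedralGroup 6) :=
  c[r 0, r 3, sr 0, sr 3] * c[r 1, r 5, sr 1, sr 5] * c[r 2, r 4, sr 2, sr 4]

namespace IsTautRotation

theorem chord_cases (hβ : IsTautRotation β) (i : ZMod 6) :
    Chord β i (i + 2) ∨ Chord β i (i + 3) ∨ Chord β i (i + 4) := by
  obtain ⟨j, hj⟩ := exists_chord β i
  obtain ⟨d, rfl⟩ : ∃ d, j = i + d := ⟨j - i, (add_sub_cancel i j).symm⟩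
  have hcases : ∀ d : ZMod 6, d = 0 ∨ d = 1 ∨ d = 2 ∨ d = 3 ∨ d = 4 ∨ d = -1 := by decide
  rcases hcases d with rfl | rfl | rfl | rfl | rfl | rfl
  · exact absurd ((add_zero i).subst (motive := Chord β i) hj) (hβ.not_chord_self i)
  · exact absurd (add_comm i 1 ▸ hj) (hβ.not_chord_add_one i)
  · exact .inl hj
  · exact .inr (.inl hj)
  · exact .inr (.inr hj)
  · have hprev := hβ.not_chord_add_one (i + -1)
    rw [show 1 + (i + -1) = i by ring] at hprev
    exact absurd (hβ.chord_symm hj) hprev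

/- Otherwise every chord joins passes of the same parity, but there are three passes of each
parity. -/
theorem exists_chord_add_three (hβ : IsTautRotation β) : ∃ i, Chord β i (i + 3) := by
  by_contra! hlong
  have hshort (i : ZMod 6) : Chord β i (i + 2) ∨ Chord β i (i + 4) := by
    simpa [hlong i] using hβ.chord_cases i
  have hdisjoint {i j k : ZMod 6} (hjk : j ≠ k) (hj : Chord β i j) : ¬ Chord β k i :=
    fun hk => hjk (hj.eq_of_right (hβ.chord_symm hk))
  rcases hshort 0 with h02 | h04
  · rcases hshort 4 with h40 | h42
    · exact hdisjoint (by decide) h02 h40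
    · exact hdisjoint (by decide) (hβ.chord_symm h02) h42
  · rcases hshort 2 with h24 | h20
    · exact hdisjoint (by decide) (hβ.chord_symm h04) h24
    · exact hdisjoint (by decide) h04 h20

theorem exists_relabel_apply_r_zero (hβ : IsTautRotation β) :
    ∃ h, relabel h β (r 0) = r 3 := by
  obtain ⟨i, hi | hi⟩ := hβ.exists_chord_add_three
  · exact ⟨r i, by simp [relabel_apply, hi]⟩
  · refine ⟨sr (i + 3), ?_⟩
    rw [relabel_apply, r_mul_sr, sub_zero, (hβ.apply_r_of_apply_sr hi).2.2, inv_sr, sr_mul_sr,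
      add_sub_cancel_left]

theorem chord_two (hβ : IsTautRotation β) (h0 : Chord β 0 3) : Chord β 2 4 ∨ Chord β 2 5 := by
  rcases hβ.chord_cases 2 with h24 | h25 | h20
  · exact .inl h24
  · exact .inr h25
  · exact absurd (h0.eq_of_right (hβ.chord_symm h20)) (by decide)

/- If passes `1` and `4` were joined, all three chords would be diameters of the Gauss diagram and
every choice of the two remaining crossing signs would create a bigon. -/
theorem not_chord_one_four (hβ : IsTautRotation β) (h0 : β (r 0) = r 3) : ¬ Chord β 1 4 := by
  rintro (h1 | h1)
  · rcases hβ.chord_two (.inl h0) with h24 | h2 | h2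
    · exact absurd ((hβ.chord_symm (.inl h1)).eq_of_right (hβ.chord_symm h24)) (by decide)
    · exact hβ.not_face_apply_eq (g := sr 3) (h := r 5) h2 (hβ.apply_r_of_apply_r h0).2.1
    · exact hβ.not_face_apply_eq (g := sr 2) (h := r 4) h1 (hβ.apply_r_of_apply_sr h2).2.2
  · exact hβ.not_face_apply_eq (g := sr 1) (h := r 3) h0 (hβ.apply_r_of_apply_sr h1).2.2

/- Again the two combinations of crossing signs that are left out create a bigon. -/
theorem apply_r_one_and_apply_r_two (hβ : IsTautRotation β) (h0 : β (r 0) = r 3) :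
    β (r 1) = r 5 ∧ β (r 2) = r 4 ∨ β (r 1) = sr 5 ∧ β (r 2) = sr 4 := by
  have h15 : Chord β 1 5 := by
    rcases hβ.chord_cases 1 with h13 | h14 | h15
    · exact absurd ((hβ.chord_symm h13).eq_of_right (hβ.chord_symm (.inl h0))) (by decide)
    · exact absurd h14 (hβ.not_chord_one_four h0)
    · exact h15
  have h24 : Chord β 2 4 := (hβ.chord_two (.inl h0)).resolve_right fun h25 =>
    absurd ((hβ.chord_symm h15).eq_of_right (hβ.chord_symm h25)) (by decide)
  rcases h15 with h1 | h1 <;> rcases h24 with h2 | h2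
  · exact .inl ⟨h1, h2⟩
  · exact absurd (hβ.apply_r_of_apply_r h1).2.2
      (hβ.not_face_apply_eq (g := r 1) (h := r 4) (hβ.apply_r_of_apply_sr h2).2.1)
  · exact absurd (hβ.apply_r_of_apply_r h2).1
      (hβ.not_face_apply_eq (g := sr 2) (h := sr 5) h1)
  · exact .inr ⟨h1, h2⟩

theorem eq_standardRotation (hβ : IsTautRotation β) (h0 : β (r 0) = r 3) (h1 : β (r 1) = r 5)
    (h2 : β (r 2) = r 4) : β = standardRotation := by
  obtain ⟨h3, hs0, hs3⟩ := hβ.apply_r_of_apply_r h0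
  obtain ⟨h5, hs1, hs5⟩ := hβ.apply_r_of_apply_r h1
  obtain ⟨h4, hs2, hs4⟩ := hβ.apply_r_of_apply_r h2
  ext g
  rcases g with i | i <;> fin_cases i
  · exact h0
  · exact h1
  · exact h2
  · exact h3
  · exact h4
  · exact h5
  · exact hs0
  · exact hs1
  · exact hs2
  · exact hs3
  · exact hs4
  · exact hs5

/- The two sign choices found above are exchanged by reversing the direction of the curve, which is
the relabelling by `sr 0`. -/
theorem exists_relabel_eq_standardRotation_of_apply_r_zero (hβ : IsTautRotation β)
    (h0 : β (r 0) = r 3) : ∃ h, relabel h β = standardRotation := by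
  rcases hβ.apply_r_one_and_apply_r_two h0 with ⟨h1, h2⟩ | ⟨h1, h2⟩
  · refine ⟨1, (isTautRotation_relabel hβ 1).eq_standardRotation ?_ ?_ ?_⟩ <;>
      simpa only [relabel_apply, mul_one, inv_one]
  · have hs0 : β (r 0 * sr 0) = sr 3 := (hβ.apply_r_of_apply_r h0).2.1
    have hs1 : β (r 1 * sr 0) = sr 1 := (hβ.apply_r_of_apply_sr h1).2.2
    have hs2 : β (r 2 * sr 0) = sr 2 := (hβ.apply_r_of_apply_sr h2).2.2
    refine ⟨sr 0, (isTautRotation_relabel hβ _).eq_standardRotation ?_ ?_ ?_⟩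
    · rw [relabel_apply, hs0]; decide
    · rw [relabel_apply, hs1]; decide
    · rw [relabel_apply, hs2]; decide

theorem exists_relabel_eq_standardRotation (hβ : IsTautRotation β) :
    ∃ h, relabel h β = standardRotation := by
  obtain ⟨k, hk⟩ := hβ.exists_relabel_apply_r_zero
  obtain ⟨h, hh⟩ :=
    (isTautRotation_relabel hβ k).exists_relabel_eq_standardRotation_of_apply_r_zero hk
  exact ⟨h * k, relabel_relabel h k β ▸ hh⟩

end IsTautRotation

end ThreeCrossings

section CurvePair

variable {X : Type*}

/-- The pair of the standard curve with three double points, its darts labelled through `e`. -/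
def standardPair (e : DihedralGroup 6 ≃ X) : Perm X × Perm X :=
  (e.permCongr (Equiv.mulLeft (sr 1)), e.permCongr standardRotation)

theorem exists_conj_standardPair (e f : DihedralGroup 6 ≃ X) :
    ∃ π : Perm X, (standardPair f).1 = π * (standardPair e).1 * π⁻¹ ∧
      (standardPair f).2 = π * (standardPair e).2 * π⁻¹ := by
  have htrans (σ : Perm (DihedralGroup 6)) :
      f.permCongr σ = (e.symm.trans f).permCongr (e.permCongr σ) :=
    Perm.ext fun x => by simp
  refine ⟨e.symm.trans f, ?_, ?_⟩ <;> rw [← permCongr_eq_mul] <;> exact htrans _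

variable [Fintype X] [DecidableEq X] {n : ℕ} {p : Perm X × Perm X}

/-- The monodromy pairs of closed curves with `n` double points that have no complementary monogons
or bigons. The points of `X` are the darts: `p.1` exchanges the two ends of each edge, `p.2` rotates
around the vertices, and the two cycles of `p.2 ^ 2 * p.1` traverse the curve in its two
directions. -/
structure IsTautCurvePair (n : ℕ) (p : Perm X × Perm X) : Prop where
  cycleType_edge : p.1.cycleType = Multiset.replicate (2 * n) 2
  cycleType_vertex : p.2.cycleType = Multiset.replicate n 4
  cycleType_strand : (p.2 ^ 2 * p.1).cycleType = {2 * n, 2 * n}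
  face_sq_apply_ne : ∀ x, ((p.2 * p.1) ^ 2) x ≠ x

theorem IsTautCurvePair.exists_isTautRotation [NeZero n] (hp : IsTautCurvePair n p)
    (hX : Fintype.card X = 4 * n) :
    ∃ (e : DihedralGroup (2 * n) ≃ X) (β : Perm (DihedralGroup (2 * n))), IsTautRotation β ∧
      e.permCongr (Equiv.mulLeft (sr 1)) = p.1 ∧ e.permCongr β = p.2 := by
  have hedge := pow_apply_eq_self_iff_of_cycleType_eq_replicate hp.cycleType_edge (by lia)
  have hvertex := pow_apply_eq_self_iff_of_cycleType_eq_replicate hp.cycleType_vertex (by lia)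
  have ha : p.1 * p.1 = 1 := Perm.ext fun x => (hedge 2 x).2 (by decide)
  have hc : p.2 ^ 2 * p.2 ^ 2 = 1 := Perm.ext fun x => (hvertex 4 x).2 (by decide)
  obtain ⟨e, he1, he0⟩ := exists_equiv_dihedralGroup ha hc
    (fun x hx => absurd ((hedge 1 x).1 hx) (by decide))
    (fun x hx => absurd ((hvertex 2 x).1 hx) (by decide)) hp.cycleType_strand (by lia)
  refine ⟨e, e.symm.permCongr p.2, ⟨fun g => ?_, fun g hg => ?_⟩, he1, ?_⟩
  · have hg : (p.2 ^ 2) (e g) = e (sr 0 * g) := by rw [← he0]; simp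
    rw [← e.symm_apply_apply (sr 0 * g), ← hg]
    simp [pow_two]
  · refine hp.face_sq_apply_ne (e g) ?_
    rw [← he1]
    simpa [pow_two, symm_apply_eq] using hg
  · ext x
    simp

theorem cycleType_standardPair_face (e : DihedralGroup 6 ≃ X) :
    ((standardPair e).2 * (standardPair e).1).cycleType = {12} := by
  rw [standardPair, ← permCongr_mul, cycleType_permCongr]
  decide +kernel

theorem isTautCurvePair_of_cycleType_face [NeZero n]
    (hedge : p.1.cycleType = Multiset.replicate (2 * n) 2)
    (hvertex : p.2.cycleType = Multiset.replicate n 4)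
    (hstrand : (p.2 ^ 2 * p.1).cycleType = {2 * n, 2 * n})
    (hface : (p.2 * p.1).cycleType = {4 * n}) (hX : Fintype.card X = 4 * n) :
    IsTautCurvePair n p where
  cycleType_edge := hedge
  cycleType_vertex := hvertex
  cycleType_strand := hstrand
  face_sq_apply_ne x hx := by
    have hdvd := (pow_apply_eq_self_iff_of_cycleType_eq_replicate (m := 1) hface (by lia) 2 x).1 hx
    have := Nat.le_of_dvd two_pos hdvd
    have := NeZero.pos n
    lia

theorem isTautCurvePair_standardPair (e : DihedralGroup 6 ≃ X) :
    IsTautCurvePair 3 (standardPair e) := by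
  refine isTautCurvePair_of_cycleType_face ?_ ?_ ?_ (cycleType_standardPair_face e)
    ((Fintype.card_congr e).symm.trans DihedralGroup.card)
  · rw [standardPair, cycleType_permCongr]
    decide +kernel
  · rw [standardPair, cycleType_permCongr]
    decide +kernel
  · rw [standardPair, pow_two, ← permCongr_mul, ← permCongr_mul, cycleType_permCongr]
    decide +kernel

theorem IsTautCurvePair.exists_standardPair_eq (hp : IsTautCurvePair 3 p)
    (hX : Fintype.card X = 12) : ∃ e, standardPair e = p := by
  obtain ⟨e, β, hβ, hedge, hvertex⟩ := hp.exists_isTautRotation hX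
  obtain ⟨h, hh⟩ := IsTautRotation.exists_relabel_eq_standardRotation hβ
  refine ⟨(Equiv.mulRight h).trans e, Prod.ext ?_ ?_⟩
  · exact (permCongr_mulRight_trans_mulLeft e h _).trans hedge
  · rw [standardPair, ← hh]
    exact (permCongr_mulRight_trans_relabel e h β).trans hvertex

theorem exists_mem_closure_apply_eq_of_cycleType_face
    (hface : (p.2 * p.1).cycleType = {Fintype.card X}) (x y : X) :
    ∃ π ∈ Subgroup.closure ({p.1, p.2} : Set (Perm X)), π x = y := by
  obtain ⟨k, hk⟩ := exists_pow_apply_eq_of_cycleType_eq_singleton hface x y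
  refine ⟨(p.2 * p.1) ^ k, pow_mem (mul_mem ?_ ?_) k, hk⟩ <;>
    exact Subgroup.subset_closure (by simp)

theorem isType2412FillingCurvePair_iff (p : Perm (Fin 12) × Perm (Fin 12)) :
    IsType2412FillingCurvePair p ↔ IsTautCurvePair 3 p := by
  constructor
  · rintro ⟨-, hedge, hvertex, hface, hstrand⟩
    exact isTautCurvePair_of_cycleType_face hedge hvertex hstrand hface (Fintype.card_fin 12)
  · intro hp
    have hface : (p.2 * p.1).cycleType = {12} := by
      obtain ⟨e, rfl⟩ := hp.exists_standardPair_eq (Fintype.card_fin 12)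
      exact cycleType_standardPair_face e
    exact ⟨exists_mem_closure_apply_eq_of_cycleType_face hface, hp.cycleType_edge,
      hp.cycleType_vertex, hface, hp.cycleType_strand⟩

end CurvePair

end FillingCurve

open FillingCurve in
theorem card_uniform_filling_curves_type_2412_genus_two_general {X : Type*} [Fintype X]
    [DecidableEq X] (hX : Fintype.card X = 12) :
    Nat.card (Quot fun p q : {p : Perm X × Perm X // IsTautCurvePair 3 p} =>
      ∃ π : Perm X, q.1.1 = π * p.1.1 * π⁻¹ ∧ q.1.2 = π * p.1.2 * π⁻¹) = 1 := by
  have e : DihedralGroup 6 ≃ X := Fintype.equivOfCardEq (DihedralGroup.card.trans hX.symm)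
  rw [Nat.card_eq_one_iff_unique]
  refine ⟨⟨Quot.ind fun ⟨p, hp⟩ => Quot.ind fun ⟨q, hq⟩ => Quot.sound ?_⟩,
    ⟨Quot.mk _ ⟨standardPair e, isTautCurvePair_standardPair e⟩⟩⟩
  obtain ⟨f, rfl⟩ := hp.exists_standardPair_eq hX
  obtain ⟨g, rfl⟩ := hq.exists_standardPair_eq hX
  exact exists_conj_standardPair f g

/-- Up to equivalence there is exactly one uniform dessin of type (2,4,12) and
genus 2 corresponding to a single filling curve. -/
theorem card_uniform_filling_curves_type_2412_genus_two :
    Nat.card (Quot SimConj2412) = 1 := by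
  exact (Nat.card_congr (Quot.congr (Equiv.subtypeEquivRight
    FillingCurve.isType2412FillingCurvePair_iff) fun _ _ => Iff.rfl)).trans
    (card_uniform_filling_curves_type_2412_genus_two_general (Fintype.card_fin 12))
end

section
/- Consider the set of pairs (σ₀, σ₁) of permutations of Fin 16 such that the subgroup generated by σ₀ and σ₁ acts transitively, the cycle type of σ₀ consists of 8 copies of 2 (eight disjoint transpositions), the cycle type of σ₁ consists of 4 copies of 4 (four disjoint 4-cycles), and the cycle type of σ₁σ₀ is {8, 8} (two disjoint 8-cycles). Declare two such pairs equivalent if they are simultaneously conjugate by a permutation of Fin 16. Then there are exactly 19 equivalence classes, and exactly 4 of them additionally satisfy that the cycle type of σ₁²σ₀ is {8, 8}. -/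
/-- The monodromy pairs of uniform dessins of type (2,4,8) and genus 2:
transitive pairs on 16 points with eight transpositions, four 4-cycles and
two 8-cycle faces. -/
def IsType248Genus2Pair (p : Equiv.Perm (Fin 16) × Equiv.Perm (Fin 16)) : Prop :=
  (∀ x y : Fin 16,
    ∃ π ∈ Subgroup.closure ({p.1, p.2} : Set (Equiv.Perm (Fin 16))), π x = y) ∧
  p.1.cycleType = Multiset.replicate 8 2 ∧
  p.2.cycleType = Multiset.replicate 4 4 ∧
  (p.2 * p.1).cycleType = {8, 8}

/-- Those pairs whose uniform multicurve is a single (proper) filling curve: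
σ₁²σ₀ splits as two disjoint cycles of equal length 8. -/
def IsType248Genus2CurvePair
    (p : Equiv.Perm (Fin 16) × Equiv.Perm (Fin 16)) : Prop :=
  IsType248Genus2Pair p ∧ (p.2 ^ 2 * p.1).cycleType = {8, 8}

/-- Simultaneous conjugacy of monodromy pairs. -/
def SimConj248 (p q : {p // IsType248Genus2Pair p}) : Prop :=
  ∃ π : Equiv.Perm (Fin 16),
    q.1.1 = π * p.1.1 * π⁻¹ ∧ q.1.2 = π * p.1.2 * π⁻¹

/-- Simultaneous conjugacy of monodromy pairs of single filling curves. -/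
def SimConj248Curve (p q : {p // IsType248Genus2CurvePair p}) : Prop :=
  ∃ π : Equiv.Perm (Fin 16),
    q.1.1 = π * p.1.1 * π⁻¹ ∧ q.1.2 = π * p.1.2 * π⁻¹

/-!
Conjugating `σ₁σ₀` into the standard permutation `faceRot`, which turns two octagons by one side,
makes a monodromy pair equal to `(s, faceRot * s)` for a fixed-point-free involution `s` gluing
the sides of the octagons in pairs; the vertices of the glued surface are the cycles of
`faceRot * s`. By transitivity some side `u` of the first octagon is glued to a side `v` of the
second. Permutations commuting with `faceRot` are determined by the images of the sides `0` and
`8`, so there is a unique one taking these to `u` and `v`, and moving it back we may assume that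
`s` glues `0` to `8`. A backtracking search, which closes up the vertices one at a time to
4-cycles, finds all such gluings; each becomes one of nineteen after another choice of `(u, v)`,
and no choice of `(u, v)` takes one of the nineteen to another.
-/

namespace Type248

open Equiv Equiv.Perm Function

section CycleType

variable {α : Type*} [Fintype α] [DecidableEq α] {σ : Perm α}

theorem card_support_cycleOf_eq_minimalPeriod {x : α} (hx : σ x ≠ x) :
    (σ.cycleOf x).support.card = minimalPeriod σ x := by
  have hcycle := isCycle_cycleOf σ hx
  have hiff (n : ℕ) : σ.cycleOf x ^ n = 1 ↔ IsPeriodicPt σ n x := by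
    rw [hcycle.pow_eq_one_iff' (by rwa [cycleOf_apply_self]), cycleOf_pow_apply_self, IsPeriodicPt,
      IsFixedPt, iterate_eq_pow]
  rw [← hcycle.orderOf]
  refine Nat.dvd_antisymm ?_ ?_
  · exact orderOf_dvd_of_pow_eq_one ((hiff _).2 (isPeriodicPt_minimalPeriod σ x))
  · exact ((hiff _).1 (pow_orderOf_eq_one _)).minimalPeriod_dvd

theorem cycleType_eq_replicate_iff {m n : ℕ} (hn : 1 < n) (hcard : Fintype.card α = m * n) :
    σ.cycleType = Multiset.replicate m n ↔ ∀ x, minimalPeriod σ x = n := by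
  constructor
  · intro h x
    have hsupport : σ.support = Finset.univ := by
      rw [← Finset.card_eq_iff_eq_univ, ← sum_cycleType, h, Multiset.sum_replicate, hcard,
        smul_eq_mul]
    have hx : x ∈ σ.support := hsupport ▸ Finset.mem_univ x
    have hmem : (σ.cycleOf x).support.card ∈ σ.cycleType := by
      rw [cycleType_def]
      exact Multiset.mem_map_of_mem _ (cycleOf_mem_cycleFactorsFinset_iff.2 hx)
    rw [← card_support_cycleOf_eq_minimalPeriod (mem_support.1 hx)]
    exact Multiset.eq_of_mem_replicate (h ▸ hmem)
  · intro h
    have hmoved : ∀ x, σ x ≠ x := fun x hx =>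
      hn.ne' ((h x).symm.trans (minimalPeriod_eq_one_iff_isFixedPt.2 hx))
    have hparts : ∀ b ∈ σ.cycleType, b = n := by
      intro b hb
      rw [cycleType_def] at hb
      obtain ⟨c, hc, rfl⟩ := Multiset.mem_map.1 hb
      obtain ⟨x, hx, -⟩ := (mem_cycleFactorsFinset_iff.1 hc).1
      rw [cycle_is_cycleOf (mem_support.2 hx) hc]
      exact (card_support_cycleOf_eq_minimalPeriod (hmoved x)).trans (h x)
    have hsupport : σ.support = Finset.univ :=
      Finset.eq_univ_iff_forall.2 fun x => mem_support.2 (hmoved x)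
    have hrep := Multiset.eq_replicate_card.2 hparts
    have hsum := sum_cycleType σ
    rw [hrep, Multiset.sum_replicate, hsupport, Finset.card_univ, hcard, smul_eq_mul] at hsum
    rw [hrep, Nat.eq_of_mul_eq_mul_right (by lia) hsum]

theorem cycleType_eq_replicate_prime_pow_iff {p k m : ℕ} [hp : Fact p.Prime]
    (hcard : Fintype.card α = m * p ^ (k + 1)) :
    σ.cycleType = Multiset.replicate m (p ^ (k + 1)) ↔
      ∀ x, (σ ^ p ^ k) x ≠ x ∧ (σ ^ p ^ (k + 1)) x = x := by
  rw [cycleType_eq_replicate_iff (Nat.one_lt_pow k.succ_ne_zero hp.out.one_lt) hcard]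
  refine forall_congr' fun x => ?_
  rw [← iterate_eq_pow, ← iterate_eq_pow]
  refine ⟨fun h => ⟨fun hk => ?_, h ▸ iterate_minimalPeriod⟩,
    fun h => minimalPeriod_eq_prime_pow h.1 h.2⟩
  have hdvd : minimalPeriod σ x ∣ p ^ k := IsPeriodicPt.minimalPeriod_dvd hk
  rw [h, Nat.pow_dvd_pow_iff_le_right hp.out.one_lt] at hdvd
  lia

end CycleType

open scoped Pointwise in
theorem exists_mem_apply_notMem_of_transitive {α : Type*} [Finite α] {T : Set (Perm α)}
    (hT : ∀ x y, ∃ π ∈ Subgroup.closure T, π x = y) {S : Set α} {x y : α} (hx : x ∈ S)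
    (hy : y ∉ S) : ∃ g ∈ T, ∃ z ∈ S, g z ∉ S := by
  by_contra! h
  have hle : Subgroup.closure T ≤ MulAction.stabilizer (Perm α) S :=
    (Subgroup.closure_le _).2 fun g hg =>
      (MulAction.mem_stabilizer_set' S.toFinite).2 fun z hz => h g hg z hz
  obtain ⟨π, hπ, rfl⟩ := hT x y
  exact hy ((MulAction.mem_stabilizer_set.1 (hle hπ) x).2 hx)

section SimConj

variable {G : Type*} [Group G]

/-- Simultaneous conjugacy of pairs of group elements; restricted to pairs of permutations with the
required cycle types it is `SimConj248` and `SimConj248Curve`. -/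
def SimConj (p q : G × G) : Prop :=
  ∃ g, q.1 = g * p.1 * g⁻¹ ∧ q.2 = g * p.2 * g⁻¹

theorem equivalence_simConj : Equivalence (SimConj (G := G)) where
  refl _ := ⟨1, by simp, by simp⟩
  symm := fun ⟨g, h₁, h₂⟩ => ⟨g⁻¹, by rw [h₁]; group, by rw [h₂]; group⟩
  trans := fun ⟨g, h₁, h₂⟩ ⟨g', h₁', h₂'⟩ =>
    ⟨g' * g, by rw [h₁', h₁]; group, by rw [h₂', h₂]; group⟩

theorem SimConj.isConj_fst {p q : G × G} (h : SimConj p q) : IsConj p.1 q.1 :=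
  h.elim fun g hg => isConj_iff.2 ⟨g, hg.1.symm⟩

theorem SimConj.isConj_snd {p q : G × G} (h : SimConj p q) : IsConj p.2 q.2 :=
  h.elim fun g hg => isConj_iff.2 ⟨g, hg.2.symm⟩

theorem SimConj.isConj_pow_mul {p q : G × G} (h : SimConj p q) (n : ℕ) :
    IsConj (p.2 ^ n * p.1) (q.2 ^ n * q.1) := by
  obtain ⟨g, h₁, h₂⟩ := h
  refine isConj_iff.2 ⟨g, ?_⟩
  rw [h₁, h₂, conj_pow]
  group

theorem simConj_mul_left_iff {a s t : G} :
    SimConj (s, a * s) (t, a * t) ↔ ∃ c, Commute c a ∧ s * c = c * t := by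
  constructor
  · rintro ⟨g, rfl, h⟩
    have hcomm : a * g = g * a :=
      mul_right_cancel (b := s * g⁻¹) (by simpa [mul_assoc] using h)
    exact ⟨g⁻¹, Commute.inv_left hcomm.symm, by group⟩
  · rintro ⟨c, hc, hst⟩
    obtain rfl : t = c⁻¹ * s * c := by rw [mul_assoc, hst, inv_mul_cancel_left]
    exact ⟨c⁻¹, by simp, by simp [← mul_assoc, hc.inv_left.eq]⟩

theorem SimConj.transitive {α : Type*} {p q : Perm α × Perm α} (h : SimConj p q)
    (hp : ∀ x y, ∃ π ∈ Subgroup.closure {p.1, p.2}, π x = y) (x y : α) :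
    ∃ π ∈ Subgroup.closure {q.1, q.2}, π x = y := by
  obtain ⟨g, h₁, h₂⟩ := h
  obtain ⟨π, hπ, hxy⟩ := hp (g⁻¹ x) (g⁻¹ y)
  refine ⟨MulAut.conj g π, ?_, by rw [MulAut.conj_apply, mul_apply, mul_apply, hxy]; simp⟩
  have hmem := Subgroup.mem_map_of_mem (MulAut.conj g).toMonoidHom hπ
  rw [MonoidHom.map_closure, Set.image_pair] at hmem
  simpa [h₁, h₂] using hmem

theorem card_quot_eq_of_representatives {α ι : Type*} {r : α → α → Prop} (hr : Equivalence r)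
    (g : ι → α) (hsurj : ∀ a, ∃ i, r (g i) a) (hinj : ∀ i j, r (g i) (g j) → i = j) :
    Nat.card (Quot r) = Nat.card ι := by
  refine (Nat.card_eq_of_bijective (fun i => Quot.mk r (g i)) ⟨fun i j hij => ?_, ?_⟩).symm
  · exact hinj i j ((hr.quot_mk_eq_iff _ _).1 hij)
  · rintro ⟨a⟩
    obtain ⟨i, hi⟩ := hsurj a
    exact ⟨i, Quot.sound hi⟩

end SimConj

section Search

variable {α : Type*} [DecidableEq α]

/-- The total function `s` agrees with the partial function `p` wherever `p` is defined. -/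
def Extends (s : α → α) (p : α → Option α) : Prop :=
  ∀ x, ∀ y ∈ p x, s x = y

/-- The partial involution obtained from `p` by exchanging `x` and `y`. -/
def glue (p : α → Option α) (x y : α) : α → Option α :=
  fun z => if z = x then some y else if z = y then some x else p z

/-- The ways to extend a partial fixed-point-free involution `p` to `x` with a value from `ys`,
each recorded as the value at `x` together with the extended partial involution. -/
def extensions (ys : List α) (p : α → Option α) (x : α) : List (α × (α → Option α)) :=
  match p x with
  | some y => if y ∈ ys then [(y, p)] else []
  | none => (ys.filter fun y => y ≠ x ∧ ∀ z ∈ p y, z = x).map fun y => (y, glue p x y)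

/-- The extensions of a partial gluing `p` of sides from `ys` that make `x` lie on a 4-cycle of
`φ ∘ p`, that is, that complete a vertex of valency 4 at `x`. The value excluded in
the second step would close the vertex after two sides; the value imposed in the fourth step closes
it after four. -/
def closeVertex (φ : Perm α) (ys : List α) (p : α → Option α) (x : α) : List (α → Option α) :=
  (extensions ys p x).flatMap fun (a, p) =>
  (extensions (ys.filter (· ≠ φ.symm x)) p (φ a)).flatMap fun (b, p) =>
  (extensions ys p (φ b)).flatMap fun (c, p) =>
  (extensions [φ.symm x] p (φ c)).map Prod.snd

/-- The extensions of a partial gluing `p` that complete a vertex of valency 4 at each side in a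
list. -/
def closeVertices (φ : Perm α) (ys : List α) : List α → (α → Option α) → List (α → Option α)
  | [], p => [p]
  | x :: l, p => (closeVertex φ ys p x).flatMap (closeVertices φ ys l)

variable {p : α → Option α} {ys : List α}

theorem Extends.glue {s : α → α} (hs : Involutive s) (h : Extends s p) (x : α) :
    Extends s (glue p x (s x)) := by
  intro z y hy
  unfold Type248.glue at hy
  split_ifs at hy with hzx hzsx
  · simp_all
  · rw [hzsx, hs x]
    simpa using hy
  · exact h z y hy

theorem Extends.exists_mem_extensions {s : α → α} (hs : Involutive s) (hfix : ∀ x, s x ≠ x)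
    (h : Extends s p) {x : α} (hx : s x ∈ ys) :
    ∃ q, Extends s q ∧ (s x, q) ∈ extensions ys p x := by
  unfold extensions
  split
  · next y hy =>
    obtain rfl := h x y hy
    exact ⟨p, h, by simp [hx]⟩
  · refine ⟨_, h.glue hs x, List.mem_map.2 ⟨s x, List.mem_filter.2 ⟨hx, ?_⟩, rfl⟩⟩
    exact decide_eq_true ⟨hfix x, fun z hz => (h _ z hz).symm.trans (hs x)⟩

variable {s φ : Perm α}

theorem Extends.exists_mem_closeVertex (hs : Involutive s) (hfix : ∀ x, s x ≠ x)
    (hys : ∀ x, x ∈ ys) (h : Extends s p) {x : α} (hx₂ : ((φ * s) ^ 2) x ≠ x)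
    (hx₄ : ((φ * s) ^ 4) x = x) : ∃ q ∈ closeVertex φ ys p x, Extends s q := by
  replace hx₂ : s (φ (s x)) ≠ φ.symm x := fun e => hx₂ ((φ.eq_symm_apply).1 e)
  replace hx₄ : s (φ (s (φ (s (φ (s x)))))) = φ.symm x := (φ.eq_symm_apply).2 hx₄
  obtain ⟨p₁, h₁, hp₁⟩ := h.exists_mem_extensions hs hfix (hys (s x))
  have hmem : s (φ (s x)) ∈ ys.filter (· ≠ φ.symm x) := by simpa using ⟨hys _, hx₂⟩
  obtain ⟨p₂, h₂, hp₂⟩ := h₁.exists_mem_extensions hs hfix hmem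
  obtain ⟨p₃, h₃, hp₃⟩ := h₂.exists_mem_extensions hs hfix (hys (s (φ (s (φ (s x))))))
  obtain ⟨p₄, h₄, hp₄⟩ := h₃.exists_mem_extensions hs hfix (List.mem_singleton.2 hx₄)
  exact ⟨p₄, List.mem_flatMap.2 ⟨_, hp₁, List.mem_flatMap.2 ⟨_, hp₂,
    List.mem_flatMap.2 ⟨_, hp₃, List.mem_map.2 ⟨_, hp₄, rfl⟩⟩⟩⟩, h₄⟩

theorem Extends.exists_mem_closeVertices (hs : Involutive s) (hfix : ∀ x, s x ≠ x)
    (hys : ∀ x, x ∈ ys) (hvertex : ∀ x, ((φ * s) ^ 2) x ≠ x ∧ ((φ * s) ^ 4) x = x) (l : List α)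
    (h : Extends s p) : ∃ q ∈ closeVertices φ ys l p, Extends s q := by
  induction l generalizing p with
  | nil => exact ⟨p, List.mem_singleton_self p, h⟩
  | cons x l ih =>
    obtain ⟨p', hp', h'⟩ := h.exists_mem_closeVertex hs hfix hys (hvertex x).1 (hvertex x).2
    obtain ⟨q, hq, hsq⟩ := ih h'
    exact ⟨q, List.mem_flatMap.2 ⟨p', hp', hq⟩, hsq⟩

end Search

section Octagons

/-- The rotation by `k` sides of two octagons whose sides are numbered `0, …, 7` and `8, …, 15`. -/
def turn (k : ℕ) (x : Fin 16) : Fin 16 :=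
  ⟨8 * (x.val / 8) + (x.val + k) % 8, by lia⟩

/-- The standard face permutation `(0 1 … 7)(8 9 … 15)`. -/
def faceRot : Perm (Fin 16) where
  toFun := turn 1
  invFun := turn 7
  left_inv := by decide
  right_inv := by decide

/-- The map commuting with `faceRot` that takes `0` to `u` and `8` to `v`. -/
def equivariantMap (u v x : Fin 16) : Fin 16 :=
  turn x (if x < 8 then u else v)

/-- The pair `(s, faceRot * s)`, whose product `σ₁σ₀` is `faceRot` when `s` is an involution. -/
def octagonPair (s : Perm (Fin 16)) : Perm (Fin 16) × Perm (Fin 16) :=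
  (s, faceRot * s)

variable {u v : Fin 16} {s t : Perm (Fin 16)}

theorem turn_eq_faceRot_pow (k : ℕ) : turn k = ⇑(faceRot ^ k) := by
  induction k with
  | zero => ext x; simp only [turn, pow_zero, one_apply]; lia
  | succ k ih =>
    ext x
    rw [pow_succ', mul_apply, ← ih]
    simp only [turn, faceRot, coe_fn_mk]
    lia

theorem faceRot_lt_eight_iff : ∀ x, faceRot x < 8 ↔ x < 8 := by
  decide

theorem equivariantMap_zero_eight : ∀ x, equivariantMap 0 8 x = x := by
  decide

theorem equivariantMap_zero (u v : Fin 16) : equivariantMap u v 0 = u := by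
  decide +revert

theorem equivariantMap_eight (u v : Fin 16) : equivariantMap u v 8 = v := by
  decide +revert

theorem equivariantMap_faceRot (u v x : Fin 16) :
    equivariantMap u v (faceRot x) = faceRot (equivariantMap u v x) := by
  simp only [equivariantMap, faceRot_lt_eight_iff]
  ext
  simp only [turn, faceRot, coe_fn_mk]
  lia

theorem injective_equivariantMap (huv : v < 8 ↔ ¬ u < 8) : Injective (equivariantMap u v) := by
  intro x y hxy
  simp only [equivariantMap, turn, Fin.mk.injEq, Fin.lt_def] at huv hxy ⊢
  split_ifs at hxy <;> grind

theorem exists_commute_coe_eq_equivariantMap (huv : v < 8 ↔ ¬ u < 8) :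
    ∃ c : Perm (Fin 16), Commute c faceRot ∧ ⇑c = equivariantMap u v :=
  ⟨.ofBijective _ (Finite.injective_iff_bijective.1 (injective_equivariantMap huv)),
    Perm.ext (equivariantMap_faceRot u v), rfl⟩

theorem coe_eq_equivariantMap_of_commute {c : Perm (Fin 16)} (hc : Commute c faceRot) :
    ⇑c = equivariantMap (c 0) (c 8) := by
  ext x : 1
  conv_lhs => rw [← equivariantMap_zero_eight x]
  simp only [equivariantMap, turn_eq_faceRot_pow]
  rw [← mul_apply, (hc.pow_right _).eq, mul_apply, apply_ite c]

theorem simConj_octagonPair (huv : v < 8 ↔ ¬ u < 8)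
    (h : ∀ x, s (equivariantMap u v x) = equivariantMap u v (t x)) :
    SimConj (octagonPair s) (octagonPair t) := by
  obtain ⟨c, hc, hcuv⟩ := exists_commute_coe_eq_equivariantMap huv
  exact simConj_mul_left_iff.2 ⟨c, hc, Perm.ext fun x => by simp [hcuv, h]⟩

theorem transitive_octagonPair (hs : s 0 = 8) (x y : Fin 16) :
    ∃ π ∈ Subgroup.closure {(octagonPair s).1, (octagonPair s).2}, π x = y := by
  set H := Subgroup.closure {(octagonPair s).1, (octagonPair s).2}
  have hsH : s ∈ H := Subgroup.subset_closure (Or.inl rfl)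
  have hrotH : faceRot ∈ H := by
    simpa using mul_mem (Subgroup.subset_closure (Or.inr rfl) : faceRot * s ∈ H) (inv_mem hsH)
  have hreach (z : Fin 16) : ∃ π ∈ H, π 0 = z := by
    have hz := equivariantMap_zero_eight z
    rw [equivariantMap, turn_eq_faceRot_pow] at hz
    split_ifs at hz
    · exact ⟨_, pow_mem hrotH _, hz⟩
    · exact ⟨_, mul_mem (pow_mem hrotH _) hsH, by rw [mul_apply, hs, hz]⟩
  obtain ⟨a, ha, rfl⟩ := hreach x
  obtain ⟨b, hb, rfl⟩ := hreach y
  exact ⟨b * a⁻¹, mul_mem hb (inv_mem ha), by simp⟩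

end Octagons

section Pairs

variable {σ : Perm (Fin 16)} {p q : Perm (Fin 16) × Perm (Fin 16)} {s : Perm (Fin 16)}

theorem cycleType_eq_replicate_two_iff :
    σ.cycleType = Multiset.replicate 8 2 ↔ ∀ x, σ x ≠ x ∧ (σ ^ 2) x = x := by
  simpa using cycleType_eq_replicate_prime_pow_iff (σ := σ) (p := 2) (k := 0) (m := 8) (by simp)

theorem cycleType_eq_replicate_four_iff :
    σ.cycleType = Multiset.replicate 4 4 ↔ ∀ x, (σ ^ 2) x ≠ x ∧ (σ ^ 4) x = x := by
  simpa using cycleType_eq_replicate_prime_pow_iff (σ := σ) (p := 2) (k := 1) (m := 4) (by simp)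

theorem cycleType_eq_eight_eight_iff :
    σ.cycleType = {8, 8} ↔ ∀ x, (σ ^ 4) x ≠ x ∧ (σ ^ 8) x = x := by
  simpa using! cycleType_eq_replicate_prime_pow_iff (σ := σ) (p := 2) (k := 2) (m := 2) (by simp)

theorem cycleType_faceRot : faceRot.cycleType = {8, 8} := by
  rw [cycleType_eq_eight_eight_iff]
  decide +kernel

theorem isType248Genus2Pair_of_simConj (h : SimConj p q) (hp : IsType248Genus2Pair p) :
    IsType248Genus2Pair q := by
  obtain ⟨htrans, htwo, hfour, height⟩ := hp
  refine ⟨h.transitive htrans, ?_, ?_, ?_⟩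
  · rw [← htwo, isConj_iff_cycleType_eq.1 h.isConj_fst]
  · rw [← hfour, isConj_iff_cycleType_eq.1 h.isConj_snd]
  · have hmul := h.isConj_pow_mul 1
    rw [pow_one, pow_one] at hmul
    rw [← height, isConj_iff_cycleType_eq.1 hmul]

theorem isType248Genus2CurvePair_of_simConj (h : SimConj p q) (hp : IsType248Genus2CurvePair p) :
    IsType248Genus2CurvePair q :=
  ⟨isType248Genus2Pair_of_simConj h hp.1,
    (isConj_iff_cycleType_eq.1 (h.isConj_pow_mul 2)).symm.trans hp.2⟩

theorem involutive_of_isType248Genus2Pair (hp : IsType248Genus2Pair p) : Involutive p.1 :=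
  fun x => (cycleType_eq_replicate_two_iff.1 hp.2.1 x).2

theorem exists_simConj_octagonPair (hp : IsType248Genus2Pair p) :
    ∃ s, SimConj p (octagonPair s) := by
  obtain ⟨g, hg⟩ := isConj_iff.1 (isConj_iff_cycleType_eq.2 (hp.2.2.2.trans cycleType_faceRot.symm))
  have hsq : p.1 * p.1 = 1 := Perm.ext (involutive_of_isType248Genus2Pair hp)
  refine ⟨g * p.1 * g⁻¹, g, rfl, ?_⟩
  calc faceRot * (g * p.1 * g⁻¹) = g * (p.2 * (p.1 * p.1)) * g⁻¹ := by rw [← hg]; group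
    _ = g * p.2 * g⁻¹ := by rw [hsq, mul_one]

theorem exists_lt_eight_not_apply_lt_eight (hs : IsType248Genus2Pair (octagonPair s)) :
    ∃ u, u < 8 ∧ ¬ s u < 8 := by
  obtain ⟨g, rfl | rfl, u, hu, hgu⟩ := exists_mem_apply_notMem_of_transitive hs.1
    (S := {x | x < 8}) (x := 0) (y := 8) (by decide) (by decide)
  · exact ⟨u, hu, hgu⟩
  · exact ⟨u, hu, fun h => hgu ((faceRot_lt_eight_iff _).2 h)⟩

theorem exists_simConj_octagonPair_apply_zero (hp : IsType248Genus2Pair p) :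
    ∃ s, SimConj p (octagonPair s) ∧ s 0 = 8 := by
  obtain ⟨s, hps⟩ := exists_simConj_octagonPair hp
  obtain ⟨u, hu, hsu⟩ := exists_lt_eight_not_apply_lt_eight (isType248Genus2Pair_of_simConj hps hp)
  obtain ⟨c, hc, hcu⟩ := exists_commute_coe_eq_equivariantMap (u := u) (v := s u) (by tauto)
  have hroot : SimConj (octagonPair s) (octagonPair (c⁻¹ * s * c)) :=
    simConj_mul_left_iff.2 ⟨c, hc, by group⟩
  refine ⟨_, equivalence_simConj.trans hps hroot, ?_⟩
  rw [mul_apply, mul_apply, inv_eq_iff_eq, hcu, equivariantMap_zero, equivariantMap_eight]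

end Pairs

section Classification

/-- Nineteen gluings of the sides of two octagons, one for each equivalence class, picked from the
results of the search; the entry of a row at `x` is the side glued to `x`. -/
def gluing : Fin 19 → Fin 16 → Fin 16 :=
  ![![8, 3, 5, 1, 6, 2, 4, 15, 0, 11, 13, 9, 14, 10, 12, 7],
    ![8, 3, 6, 1, 12, 7, 2, 5, 0, 11, 14, 9, 4, 15, 10, 13],
    ![8, 3, 10, 1, 6, 13, 4, 15, 0, 11, 2, 9, 14, 5, 12, 7],
    ![8, 3, 10, 1, 12, 7, 14, 5, 0, 11, 2, 9, 4, 15, 6, 13],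
    ![8, 3, 13, 1, 6, 10, 4, 15, 0, 11, 5, 9, 14, 2, 12, 7],
    ![8, 3, 14, 1, 12, 7, 10, 5, 0, 11, 6, 9, 4, 15, 2, 13],
    ![8, 3, 14, 1, 12, 9, 10, 11, 0, 5, 6, 7, 4, 15, 2, 13],
    ![8, 4, 5, 15, 1, 2, 14, 11, 0, 12, 13, 7, 9, 10, 6, 3],
    ![8, 4, 6, 13, 1, 10, 2, 12, 0, 14, 5, 15, 7, 3, 9, 11],
    ![8, 4, 7, 9, 1, 11, 14, 2, 0, 3, 13, 5, 15, 10, 6, 12],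
    ![8, 4, 13, 7, 1, 10, 14, 3, 0, 12, 5, 15, 9, 2, 6, 11],
    ![8, 4, 14, 11, 1, 9, 12, 13, 0, 5, 15, 3, 6, 7, 2, 10],
    ![8, 5, 6, 15, 12, 1, 2, 11, 0, 13, 14, 7, 4, 9, 10, 3],
    ![8, 5, 14, 7, 12, 1, 10, 3, 0, 13, 6, 15, 4, 9, 2, 11],
    ![8, 5, 14, 9, 12, 1, 10, 13, 0, 3, 6, 15, 4, 7, 2, 11],
    ![8, 9, 10, 15, 12, 13, 14, 11, 0, 1, 2, 7, 4, 5, 6, 3],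
    ![8, 9, 11, 13, 14, 10, 15, 12, 0, 1, 5, 2, 7, 3, 4, 6],
    ![8, 9, 12, 14, 10, 15, 11, 13, 0, 1, 4, 6, 2, 7, 3, 5],
    ![8, 11, 14, 9, 12, 15, 10, 13, 0, 3, 6, 1, 4, 7, 2, 5]]

theorem involutive_gluing : ∀ i x, gluing i (gluing i x) = x := by
  decide +kernel

/-- The involutions given by `gluing`. -/
def rep (i : Fin 19) : Perm (Fin 16) :=
  Involutive.toPerm (gluing i) (involutive_gluing i)

theorem rep_apply_zero : ∀ i, rep i 0 = 8 := by
  decide +kernel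

theorem isType248Genus2Pair_octagonPair_rep (i : Fin 19) :
    IsType248Genus2Pair (octagonPair (rep i)) := by
  refine ⟨transitive_octagonPair (rep_apply_zero i), ?_, ?_, ?_⟩
  · rw [cycleType_eq_replicate_two_iff]
    revert i
    decide +kernel
  · rw [cycleType_eq_replicate_four_iff]
    revert i
    decide +kernel
  · have hsq : rep i * rep i = 1 := Perm.ext (involutive_gluing i)
    rw [octagonPair, mul_assoc, hsq, mul_one, cycleType_faceRot]

theorem exists_equivariantMap_rep_of_mem_closeVertices :
    ∀ q ∈ closeVertices faceRot (List.finRange 16) (List.finRange 16) (glue (fun _ => none) 0 8),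
      ∃ u, ∃ v ∈ q u, (v < 8 ↔ ¬ u < 8) ∧
        ∃ i, ∀ x, equivariantMap u v (rep i x) ∈ q (equivariantMap u v x) := by
  -- The kernel evaluates `List.all` far faster than the `Decidable` instance of `∀ q ∈ l, _`.
  refine List.all_iff_forall_prop.1 ?_
  decide +kernel

theorem exists_simConj_octagonPair_rep {p : Perm (Fin 16) × Perm (Fin 16)}
    (hp : IsType248Genus2Pair p) : ∃ i, SimConj p (octagonPair (rep i)) := by
  obtain ⟨s, hps, hs⟩ := exists_simConj_octagonPair_apply_zero hp
  have hpair := isType248Genus2Pair_of_simConj hps hp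
  have hinv : Involutive s := involutive_of_isType248Genus2Pair hpair
  have hfix : ∀ x, s x ≠ x := fun x => (cycleType_eq_replicate_two_iff.1 hpair.2.1 x).1
  have hstart : Extends s (glue (fun _ => none) 0 8) := by
    simpa [hs] using Extends.glue (p := fun _ => none) hinv (by simp [Extends]) 0
  obtain ⟨q, hq, hsq⟩ := hstart.exists_mem_closeVertices hinv hfix List.mem_finRange
    (cycleType_eq_replicate_four_iff.1 hpair.2.2.1) (List.finRange 16)
  obtain ⟨u, v, -, huv, i, hi⟩ := exists_equivariantMap_rep_of_mem_closeVertices q hq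
  exact ⟨i, equivalence_simConj.trans hps (simConj_octagonPair huv fun x => hsq _ _ (hi x))⟩

theorem eq_of_equivariantMap_rep : ∀ i j u,
    (∀ x, rep i (equivariantMap u (rep i u) x) = equivariantMap u (rep i u) (rep j x)) → i = j := by
  decide +kernel

theorem eq_of_simConj_octagonPair_rep {i j : Fin 19}
    (h : SimConj (octagonPair (rep i)) (octagonPair (rep j))) : i = j := by
  obtain ⟨c, hc, hcomm⟩ := simConj_mul_left_iff.1 h
  have hcomm (x : Fin 16) : rep i (c x) = c (rep j x) := Perm.congr_fun hcomm x
  have hceight : c 8 = rep i (c 0) := by rw [hcomm, rep_apply_zero]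
  refine eq_of_equivariantMap_rep i j (c 0) fun x => ?_
  rw [← hceight, ← coe_eq_equivariantMap_of_commute hc, hcomm]

theorem card_quot_simConj {P : Perm (Fin 16) × Perm (Fin 16) → Prop}
    (hP : ∀ {p}, P p → IsType248Genus2Pair p) (hconj : ∀ {p q}, SimConj p q → P p → P q) :
    Nat.card (Quot fun p q : {p // P p} => SimConj p.1 q.1) =
      Nat.card {i // P (octagonPair (rep i))} := by
  refine card_quot_eq_of_representatives (equivalence_simConj.comap Subtype.val)
    (fun i => ⟨octagonPair (rep i), i.2⟩) (fun p => ?_)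
    fun i j h => Subtype.ext (eq_of_simConj_octagonPair_rep h)
  obtain ⟨i, hi⟩ := exists_simConj_octagonPair_rep (hP p.2)
  exact ⟨⟨i, hconj hi p.2⟩, equivalence_simConj.symm hi⟩

theorem card_isType248Genus2CurvePair_octagonPair_rep :
    Nat.card {i // IsType248Genus2CurvePair (octagonPair (rep i))} = 4 := by
  simp only [IsType248Genus2CurvePair, isType248Genus2Pair_octagonPair_rep, true_and,
    cycleType_eq_eight_eight_iff, Nat.card_eq_fintype_card]
  decide +kernel

end Classification

end Type248

/-- Up to equivalence there are exactly 19 uniform multicurves of genus 2 and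
type (2,4,8), of which exactly 4 are proper filling curves. -/
theorem card_uniform_multicurves_type_248_genus_two :
    Nat.card (Quot SimConj248) = 19 ∧ Nat.card (Quot SimConj248Curve) = 4 := by
  constructor
  · refine (Type248.card_quot_simConj id Type248.isType248Genus2Pair_of_simConj).trans ?_
    simp [Type248.isType248Genus2Pair_octagonPair_rep]
  · exact (Type248.card_quot_simConj And.left Type248.isType248Genus2CurvePair_of_simConj).trans
      Type248.card_isType248Genus2CurvePair_octagonPair_rep
end

section
/- Let E ≥ 1 be a natural number and let σ₀, σ₁ be permutations of ℕ whose supports are contained in {1, …, E}. Let a, b ∈ {1, …, E} with a ≠ b, σ₀ a = b and σ₀ b = a (so (a,b) is a 2-cycle of σ₀). Define σ̃₀ = σ₀ · (a b) · (a, E+5) · (E+1, E+6) · (E+2, E+7) · (E+3, E+8) · (E+4, b) (a product of the indicated pairwise disjoint transpositions with σ₀·swap a b), and σ̃₁ = σ₁ · c₁ · c₂ where c₁ is the 4-cycle (E+5, E+1, E+3, E+7) and c₂ is the 4-cycle (E+4, E+2, E+6, E+8). Then σ̃₁σ̃₀ is conjugate in Perm ℕ to the permutation σ₁ σ₀ γ₇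 γ₃, where γ₇ is the 7-cycle (a, E+5, E+6, E+3, E+2, E+1, E+8), γ₃ is the 3-cycle (b, E+4, E+7), and products of permutations are composed applying the rightmost factor first. -/
/-- The surgered permutation
`σ̃₀ = σ₀ · (a b) · (a, E+5) · (E+1, E+6) · (E+2, E+7) · (E+3, E+8) · (E+4, b)`. -/
def surgeredSigma0 (σ₀ : Equiv.Perm ℕ) (E a b : ℕ) : Equiv.Perm ℕ :=
  σ₀ * Equiv.swap a b * Equiv.swap a (E + 5) * Equiv.swap (E + 1) (E + 6) *
    Equiv.swap (E + 2) (E + 7) * Equiv.swap (E + 3) (E + 8) *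
    Equiv.swap (E + 4) b

/-- The surgered permutation
`σ̃₁ = σ₁ · (E+5, E+1, E+3, E+7) · (E+4, E+2, E+6, E+8)`. -/
def surgeredSigma1 (σ₁ : Equiv.Perm ℕ) (E : ℕ) : Equiv.Perm ℕ :=
  σ₁ * [E + 5, E + 1, E + 3, E + 7].formPerm * [E + 4, E + 2, E + 6, E + 8].formPerm

/-!
Let `c` be the product of the two `4`-cycles appended to `σ₁`, and `τ` the product of the six
transpositions appended to `σ₀`. The points moved by `c` are fixed by `σ₁`, so
`σ̃₁σ̃₀ = σ₁ c σ₀ τ = c (σ₁ σ₀ τ)`, which conjugation by `c⁻¹` turns into `σ₁ σ₀ (τ c)`. It remains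
to identify `τ c` with `γ₇ γ₃`: multiplying by a transposition merges two cycles into one, or splits
one cycle into two, and the six transpositions of `τ` do this one after the other to the cycles
of `c`. The point `E + i` is abstracted to a point `xᵢ` of an arbitrary type.
-/

section

variable {α : Type*} [DecidableEq α]

open Equiv

theorem swap_mul_formPerm_append {a b : α} {l : List α} (m : List α) (hb : b ∉ a :: l) :
    swap a b * (a :: l ++ b :: m).formPerm = (a :: l).formPerm * (b :: m).formPerm := by
  induction l generalizing a with
  | nil => simp
  | cons c l ih =>
    obtain ⟨hba, hbc, hbl⟩ : b ≠ a ∧ b ≠ c ∧ b ∉ l := by simpa using hb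
    have swap_mul_swap : swap a b * swap a c = swap a c * swap c b := by
      rw [mul_swap_eq_swap_mul (swap a c), swap_apply_right, swap_apply_of_ne_of_ne hba hbc]
    calc swap a b * (a :: c :: l ++ b :: m).formPerm
        = swap a b * swap a c * (c :: l ++ b :: m).formPerm := by
          simp only [List.cons_append, List.formPerm_cons_cons, mul_assoc]
      _ = swap a c * (swap c b * (c :: l ++ b :: m).formPerm) := by
          rw [swap_mul_swap, mul_assoc]
      _ = (a :: c :: l).formPerm * (b :: m).formPerm := by
          rw [ih (by simp [hbc, hbl]), List.formPerm_cons_cons, mul_assoc]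

theorem swap_mul_formPerm_mul_formPerm {a b : α} {l : List α} (m : List α) (hb : b ∉ a :: l) :
    swap a b * ((a :: l).formPerm * (b :: m).formPerm) = (a :: l ++ b :: m).formPerm := by
  rw [← swap_mul_formPerm_append m hb, swap_mul_self_mul]

theorem commute_formPerm_of_forall_mem_apply_eq {σ : Perm α} {l : List α}
    (hσ : ∀ x ∈ l, σ x = x) : Commute σ l.formPerm :=
  Perm.Disjoint.commute fun x ↦
    (em (x ∈ l)).imp (hσ x) List.formPerm_apply_of_notMem

theorem swaps_mul_fourCycle_mul_fourCycle_eq_nineCycle {b x₁ x₂ x₃ x₄ x₅ x₆ x₇ x₈ : α}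
    (hd : [b, x₁, x₂, x₃, x₄, x₅, x₆, x₇, x₈].Nodup) :
    swap x₁ x₆ * swap x₂ x₇ * swap x₃ x₈ * swap x₄ b *
        ([x₅, x₁, x₃, x₇].formPerm * [x₄, x₂, x₆, x₈].formPerm) =
      [x₅, x₆, x₃, x₂, x₁, x₈, b, x₄, x₇].formPerm := by
  simp only [List.nodup_cons, List.mem_cons, not_or] at hd
  have insert_b : swap x₄ b * ([x₅, x₁, x₃, x₇].formPerm * [x₄, x₂, x₆, x₈].formPerm) =
      [x₃, x₇, x₅, x₁].formPerm * [x₈, b, x₄, x₂, x₆].formPerm := by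
    have hcomm : Commute (swap x₄ b) [x₅, x₁, x₃, x₇].formPerm :=
      commute_formPerm_of_forall_mem_apply_eq (by grind)
    calc swap x₄ b * ([x₅, x₁, x₃, x₇].formPerm * [x₄, x₂, x₆, x₈].formPerm)
        = [x₅, x₁, x₃, x₇].formPerm * [b, x₄, x₂, x₆, x₈].formPerm := by
          rw [hcomm.left_comm, swap_comm, ← List.formPerm_cons_cons]
      _ = [x₃, x₇, x₅, x₁].formPerm * [x₈, b, x₄, x₂, x₆].formPerm :=
          congrArg₂ (· * ·) (List.formPerm_rotate _ (by grind) 2).symm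
            (List.formPerm_rotate _ (by grind) 4).symm
  have merge_x₃_x₈ : swap x₃ x₈ * ([x₃, x₇, x₅, x₁].formPerm * [x₈, b, x₄, x₂, x₆].formPerm) =
      [x₃, x₇, x₅, x₁, x₈, b, x₄, x₂, x₆].formPerm :=
    swap_mul_formPerm_mul_formPerm _ (by grind)
  have split_x₂_x₇ : swap x₂ x₇ * [x₃, x₇, x₅, x₁, x₈, b, x₄, x₂, x₆].formPerm =
      [x₁, x₈, b, x₄, x₇, x₅].formPerm * [x₆, x₃, x₂].formPerm :=
    calc swap x₂ x₇ * [x₃, x₇, x₅, x₁, x₈, b, x₄, x₂, x₆].formPerm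
        = swap x₇ x₂ * [x₇, x₅, x₁, x₈, b, x₄, x₂, x₆, x₃].formPerm :=
          congrArg₂ (· * ·) (swap_comm _ _) (List.formPerm_rotate _ (by simp_all [eq_comm]) 1).symm
      _ = [x₇, x₅, x₁, x₈, b, x₄].formPerm * [x₂, x₆, x₃].formPerm :=
          swap_mul_formPerm_append (l := [x₅, x₁, x₈, b, x₄]) _ (by grind)
      _ = [x₁, x₈, b, x₄, x₇, x₅].formPerm * [x₆, x₃, x₂].formPerm :=
          congrArg₂ (· * ·) (List.formPerm_rotate _ (by grind) 2).symm
            (List.formPerm_rotate _ (by simp_all [eq_comm]) 1).symm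
  have merge_x₁_x₆ : swap x₁ x₆ * ([x₁, x₈, b, x₄, x₇, x₅].formPerm * [x₆, x₃, x₂].formPerm) =
      [x₅, x₆, x₃, x₂, x₁, x₈, b, x₄, x₇].formPerm :=
    calc swap x₁ x₆ * ([x₁, x₈, b, x₄, x₇, x₅].formPerm * [x₆, x₃, x₂].formPerm)
        = [x₁, x₈, b, x₄, x₇, x₅, x₆, x₃, x₂].formPerm :=
          swap_mul_formPerm_mul_formPerm _ (by grind)
      _ = [x₅, x₆, x₃, x₂, x₁, x₈, b, x₄, x₇].formPerm :=
          (List.formPerm_rotate _ (by simp_all [eq_comm]) 5).symm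
  simp only [mul_assoc, insert_b, merge_x₃_x₈, split_x₂_x₇, merge_x₁_x₆]

theorem swaps_mul_fourCycle_mul_fourCycle_eq_sevenCycle_mul_threeCycle
    {a b x₁ x₂ x₃ x₄ x₅ x₆ x₇ x₈ : α} (hd : [a, b, x₁, x₂, x₃, x₄, x₅, x₆, x₇, x₈].Nodup) :
    swap a b * swap a x₅ * swap x₁ x₆ * swap x₂ x₇ * swap x₃ x₈ * swap x₄ b *
        ([x₅, x₁, x₃, x₇].formPerm * [x₄, x₂, x₆, x₈].formPerm) =
      [a, x₅, x₆, x₃, x₂, x₁, x₈].formPerm * [b, x₄, x₇].formPerm :=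
  calc swap a b * swap a x₅ * swap x₁ x₆ * swap x₂ x₇ * swap x₃ x₈ * swap x₄ b *
        ([x₅, x₁, x₃, x₇].formPerm * [x₄, x₂, x₆, x₈].formPerm)
      = swap a b * (swap a x₅ * [x₅, x₆, x₃, x₂, x₁, x₈, b, x₄, x₇].formPerm) := by
        simp only [← swaps_mul_fourCycle_mul_fourCycle_eq_nineCycle hd.of_cons, mul_assoc]
    _ = swap a b * [a, x₅, x₆, x₃, x₂, x₁, x₈, b, x₄, x₇].formPerm := by
        rw [← List.formPerm_cons_cons]
    _ = [a, x₅, x₆, x₃, x₂, x₁, x₈].formPerm * [b, x₄, x₇].formPerm :=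
        swap_mul_formPerm_append (l := [x₅, x₆, x₃, x₂, x₁, x₈]) _ (by grind)

end

theorem isConj_mul_mul_of_commute {G : Type*} [Group G] {g c : G} (h : Commute g c) (k : G) :
    IsConj (g * c * k) (g * k * c) :=
  isConj_iff.mpr ⟨c⁻¹, by simp [h.eq, mul_assoc]⟩

open Equiv in
theorem surgery_product_isConj_general {α : Type*} [DecidableEq α] (σ₀ σ₁ : Perm α)
    {a b x₁ x₂ x₃ x₄ x₅ x₆ x₇ x₈ : α} (hd : [a, b, x₁, x₂, x₃, x₄, x₅, x₆, x₇, x₈].Nodup)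
    (hσ₁ : ∀ x ∈ [x₁, x₂, x₃, x₄, x₅, x₆, x₇, x₈], σ₁ x = x) :
    IsConj
      (σ₁ * [x₅, x₁, x₃, x₇].formPerm * [x₄, x₂, x₆, x₈].formPerm *
        (σ₀ * swap a b * swap a x₅ * swap x₁ x₆ * swap x₂ x₇ * swap x₃ x₈ * swap x₄ b))
      (σ₁ * σ₀ * [a, x₅, x₆, x₃, x₂, x₁, x₈].formPerm * [b, x₄, x₇].formPerm) := by
  have hcomm : Commute σ₁ ([x₅, x₁, x₃, x₇].formPerm * [x₄, x₂, x₆, x₈].formPerm) :=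
    (commute_formPerm_of_forall_mem_apply_eq (by grind)).mul_right
      (commute_formPerm_of_forall_mem_apply_eq (by grind))
  have hconj := isConj_mul_mul_of_commute hcomm
    (σ₀ * (swap a b * swap a x₅ * swap x₁ x₆ * swap x₂ x₇ * swap x₃ x₈ * swap x₄ b))
  rw [← mul_assoc σ₁ σ₀, mul_assoc (σ₁ * σ₀),
    swaps_mul_fourCycle_mul_fourCycle_eq_sevenCycle_mul_threeCycle hd] at hconj
  simpa only [mul_assoc] using hconj

/-- Equation (3) of the paper: the surgered product σ̃₁σ̃₀ is conjugate in
Perm ℕ to σ₁σ₀ · (a, E+5, E+6, E+3, E+2, E+1, E+8) · (b, E+4, E+7). -/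
theorem surgery_product_isConj
    (E : ℕ) (hE : 1 ≤ E) (σ₀ σ₁ : Equiv.Perm ℕ)
    (hs0 : ∀ x : ℕ, σ₀ x ≠ x → x ∈ Finset.Icc 1 E)
    (hs1 : ∀ x : ℕ, σ₁ x ≠ x → x ∈ Finset.Icc 1 E)
    (a b : ℕ) (ha : a ∈ Finset.Icc 1 E) (hb : b ∈ Finset.Icc 1 E)
    (hab : a ≠ b) (hσa : σ₀ a = b) (hσb : σ₀ b = a) :
    IsConj (surgeredSigma1 σ₁ E * surgeredSigma0 σ₀ E a b)
      (σ₁ * σ₀ * [a, E + 5, E + 6, E + 3, E + 2, E + 1, E + 8].formPerm *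
        [b, E + 4, E + 7].formPerm) := by
  have hnew : ∀ x ∈ [E + 1, E + 2, E + 3, E + 4, E + 5, E + 6, E + 7, E + 8],
      x ∉ Finset.Icc 1 E := by simp
  have hd : [a, b, E + 1, E + 2, E + 3, E + 4, E + 5, E + 6, E + 7, E + 8].Nodup :=
    List.nodup_cons.mpr ⟨List.not_mem_cons_of_ne_of_not_mem hab fun h ↦ hnew a h ha,
      List.nodup_cons.mpr ⟨fun h ↦ hnew b h hb, by simp⟩⟩
  exact surgery_product_isConj_general σ₀ σ₁ hd fun x hx ↦ not_imp_comm.mp (hs1 x) (hnew x hx)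
end

section
/- In the setting of the surgery: let E ≥ 1, let σ₀, σ₁ be permutations of ℕ with supports contained in {1, …, E}, let a ≠ b in {1, …, E} with σ₀ a = b and σ₀ b = a, and define σ̃₀ = σ₀ · (a b) · (a, E+5) · (E+1, E+6) · (E+2, E+7) · (E+3, E+8) · (E+4, b) and σ̃₁ = σ₁ · (E+5, E+1, E+3, E+7) · (E+4, E+2, E+6, E+8). If the subgroup generated by σ₀ and σ₁ acts transitively on {1, …, E}, then the subgroup generated by σ̃₀ and σ̃₁ acts transitively on {1, …, E+8}. -/
/-!
The orbits of `⟨σ₀, σ₁⟩` are the connected components of the dessin. The surgery splices the new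
edges `E + 5` and `E + 4` into the cycles of `σ₀`: under `σ̃₀` one has `a ↦ E + 5 ↦ σ₀ b` and
`b ↦ E + 4 ↦ σ₀ a`, or `a ↦ E + 4 ↦ E + 5 ↦ σ₀ a` if `a = b`. The eight new edges form two 4-cycles
of `σ̃₁`, joined to each other by the 2-cycle `(E + 1, E + 6)` of `σ̃₀`. Hence `a`, `b`, `σ₀ a`,
`σ₀ b` and all new edges lie in one component of the surgered dessin; as `σ̃₀` and `σ̃₁` agree with
`σ₀` and `σ₁` at all other old edges, old edges that were connected stay connected.
-/

open Equiv

section EdgeComponents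

variable {α : Type*} {σ₀ σ₁ : Perm α}

/-- Two edges are related when they lie in the same connected component of the dessin with
monodromy pair `(σ₀, σ₁)`, that is, in the same orbit of `⟨σ₀, σ₁⟩`. -/
def edgeComponents (σ₀ σ₁ : Perm α) : Setoid α :=
  MulAction.orbitRel (Subgroup.closure {σ₀, σ₁}) α

theorem edgeComponents_iff {x y : α} :
    edgeComponents σ₀ σ₁ x y ↔ ∃ π ∈ Subgroup.closure {σ₀, σ₁}, π x = y := by
  rw [Setoid.comm', edgeComponents, MulAction.orbitRel_apply, MulAction.mem_orbit_iff]
  simp only [Subtype.exists, Subgroup.mk_smul, Perm.smul_def, exists_prop]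

theorem edgeComponents_sigma0_apply (σ₀ σ₁ : Perm α) (x : α) : edgeComponents σ₀ σ₁ x (σ₀ x) :=
  edgeComponents_iff.2 ⟨σ₀, Subgroup.subset_closure (Set.mem_insert _ _), rfl⟩

theorem edgeComponents_sigma1_apply (σ₀ σ₁ : Perm α) (x : α) : edgeComponents σ₀ σ₁ x (σ₁ x) :=
  edgeComponents_iff.2 ⟨σ₁, Subgroup.subset_closure (Set.mem_insert_of_mem _ rfl), rfl⟩

theorem edgeComponents_le {r : Setoid α} (h₀ : ∀ x, r x (σ₀ x)) (h₁ : ∀ x, r x (σ₁ x)) :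
    edgeComponents σ₀ σ₁ ≤ r := by
  have closure_apply : ∀ π ∈ Subgroup.closure {σ₀, σ₁}, ∀ x, r x (π x) := by
    intro π hπ
    induction hπ using Subgroup.closure_induction with
    | mem π hπ =>
      rcases hπ with rfl | rfl
      exacts [h₀, h₁]
    | one => exact r.refl
    | mul π ρ _ _ hπ hρ => exact fun x => r.trans (hρ x) (hπ (ρ x))
    | inv π _ hπ =>
      exact fun x => by simpa only [Perm.coe_inv, apply_symm_apply] using r.symm (hπ (π⁻¹ x))
  intro x y hxy
  obtain ⟨π, hπ, rfl⟩ := edgeComponents_iff.1 hxy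
  exact closure_apply π hπ x

end EdgeComponents

theorem apply_eq_self_of_support_Icc {α : Type*} [Preorder α] [LocallyFiniteOrder α] {f : α → α}
    {m n x : α} (hf : ∀ y, f y ≠ y → y ∈ Finset.Icc m n) (hx : n < x) : f x = x :=
  by_contra fun h => hx.not_ge (Finset.mem_Icc.1 (hf x h)).2

section Surgery

variable {σ₀ σ₁ : Perm ℕ} {E a b x : ℕ}

theorem surgeredSigma0_apply_left (hσ₀ : ∀ x, E < x → σ₀ x = x) (ha : a ≤ E) (hb : b ≤ E)
    (hab : a ≠ b) : surgeredSigma0 σ₀ E a b a = E + 5 := by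
  simp (disch := omega) only [surgeredSigma0, Perm.mul_apply, swap_apply_left,
    swap_apply_of_ne_of_ne, hσ₀]

theorem surgeredSigma0_apply_right (hσ₀ : ∀ x, E < x → σ₀ x = x) (ha : a ≤ E) (hb : b ≤ E) :
    surgeredSigma0 σ₀ E a b b = E + 4 := by
  simp (disch := omega) only [surgeredSigma0, Perm.mul_apply, swap_apply_right,
    swap_apply_of_ne_of_ne, hσ₀]

theorem surgeredSigma0_apply_add_one (hσ₀ : ∀ x, E < x → σ₀ x = x) (ha : a ≤ E) (hb : b ≤ E) :
    surgeredSigma0 σ₀ E a b (E + 1) = E + 6 := by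
  simp (disch := omega) only [surgeredSigma0, Perm.mul_apply, swap_apply_left,
    swap_apply_of_ne_of_ne, hσ₀]

theorem surgeredSigma0_apply_add_four (hb : b ≤ E) (hab : a ≠ b) :
    surgeredSigma0 σ₀ E a b (E + 4) = σ₀ a := by
  simp (disch := omega) only [surgeredSigma0, Perm.mul_apply, swap_apply_left, swap_apply_right,
    swap_apply_of_ne_of_ne]

theorem surgeredSigma0_apply_add_five (hb : b ≤ E) :
    surgeredSigma0 σ₀ E a b (E + 5) = σ₀ b := by
  simp (disch := omega) only [surgeredSigma0, Perm.mul_apply, swap_apply_left, swap_apply_right,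
    swap_apply_of_ne_of_ne]

theorem surgeredSigma0_apply_of_ne (hx : x ≤ E) (hxa : x ≠ a) (hxb : x ≠ b) :
    surgeredSigma0 σ₀ E a b x = σ₀ x := by
  simp (disch := omega) only [surgeredSigma0, Perm.mul_apply, swap_apply_of_ne_of_ne]

theorem surgeredSigma1_apply_of_le (hx : x ≤ E) : surgeredSigma1 σ₁ E x = σ₁ x := by
  simp (disch := omega) only [surgeredSigma1, List.formPerm_cons_cons, List.formPerm_singleton,
    mul_one, Perm.mul_apply, swap_apply_of_ne_of_ne]

theorem surgeredSigma1_first_cycle (hσ₁ : ∀ x, E < x → σ₁ x = x) :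
    surgeredSigma1 σ₁ E (E + 5) = E + 1 ∧ surgeredSigma1 σ₁ E (E + 1) = E + 3 ∧
      surgeredSigma1 σ₁ E (E + 3) = E + 7 := by
  refine ⟨?_, ?_, ?_⟩ <;>
  simp (disch := omega) only [surgeredSigma1, List.formPerm_cons_cons, List.formPerm_singleton,
    mul_one, Perm.mul_apply, swap_apply_left, swap_apply_of_ne_of_ne, hσ₁]

theorem surgeredSigma1_second_cycle (hσ₁ : ∀ x, E < x → σ₁ x = x) :
    surgeredSigma1 σ₁ E (E + 4) = E + 2 ∧ surgeredSigma1 σ₁ E (E + 2) = E + 6 ∧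
      surgeredSigma1 σ₁ E (E + 6) = E + 8 := by
  refine ⟨?_, ?_, ?_⟩ <;>
  simp (disch := omega) only [surgeredSigma1, List.formPerm_cons_cons, List.formPerm_singleton,
    mul_one, Perm.mul_apply, swap_apply_left, swap_apply_of_ne_of_ne, hσ₁]

/-- The connected components of the surgered dessin, with monodromy pair `(σ̃₀, σ̃₁)`. -/
def surgeredComponents (σ₀ σ₁ : Perm ℕ) (E a b : ℕ) : Setoid ℕ :=
  edgeComponents (surgeredSigma0 σ₀ E a b) (surgeredSigma1 σ₁ E)

theorem surgeredComponents_of_sigma0_apply_eq {y : ℕ} (h : surgeredSigma0 σ₀ E a b x = y) :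
    surgeredComponents σ₀ σ₁ E a b x y :=
  h ▸ edgeComponents_sigma0_apply _ _ x

theorem surgeredComponents_of_sigma1_apply_eq {y : ℕ} (h : surgeredSigma1 σ₁ E x = y) :
    surgeredComponents σ₀ σ₁ E a b x y :=
  h ▸ edgeComponents_sigma1_apply _ _ x

theorem surgeredComponents_sigma1_apply (hσ₁ : ∀ x, E < x → σ₁ x = x) (x : ℕ) :
    surgeredComponents σ₀ σ₁ E a b x (σ₁ x) := by
  obtain hx | hx := lt_or_ge E x
  · rw [hσ₁ x hx]
  · exact surgeredComponents_of_sigma1_apply_eq (surgeredSigma1_apply_of_le hx)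

variable (hσ₀ : ∀ x, E < x → σ₀ x = x) (hσ₁ : ∀ x, E < x → σ₁ x = x) (ha : a ≤ E) (hb : b ≤ E)

include hσ₀ hσ₁ ha hb

theorem surgeredComponents_add_one (hEx : E < x) (hx : x ≤ E + 8) :
    surgeredComponents σ₀ σ₁ E a b (E + 1) x := by
  set r := surgeredComponents σ₀ σ₁ E a b
  obtain ⟨h51, h13, h37⟩ := surgeredSigma1_first_cycle hσ₁
  obtain ⟨h42, h26, h68⟩ := surgeredSigma1_second_cycle hσ₁
  have r5 : r (E + 1) (E + 5) := r.symm (surgeredComponents_of_sigma1_apply_eq h51)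
  have r3 : r (E + 1) (E + 3) := surgeredComponents_of_sigma1_apply_eq h13
  have r7 : r (E + 1) (E + 7) := r.trans r3 (surgeredComponents_of_sigma1_apply_eq h37)
  have r6 : r (E + 1) (E + 6) :=
    surgeredComponents_of_sigma0_apply_eq (surgeredSigma0_apply_add_one hσ₀ ha hb)
  have r8 : r (E + 1) (E + 8) := r.trans r6 (surgeredComponents_of_sigma1_apply_eq h68)
  have r2 : r (E + 1) (E + 2) := r.trans r6 (r.symm (surgeredComponents_of_sigma1_apply_eq h26))
  have r4 : r (E + 1) (E + 4) := r.trans r2 (r.symm (surgeredComponents_of_sigma1_apply_eq h42))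
  obtain ⟨k, rfl⟩ := Nat.exists_eq_add_of_lt hEx
  have hk : k < 8 := by omega
  interval_cases k
  exacts [r.refl _, r2, r3, r4, r5, r6, r7, r8]

theorem surgeredComponents_add_one_right : surgeredComponents σ₀ σ₁ E a b (E + 1) b :=
  Setoid.trans' _ (surgeredComponents_add_one hσ₀ hσ₁ ha hb (by omega) (by omega))
    (Setoid.symm' _ <|
      surgeredComponents_of_sigma0_apply_eq (surgeredSigma0_apply_right hσ₀ ha hb))

theorem surgeredComponents_add_one_sigma0_right :
    surgeredComponents σ₀ σ₁ E a b (E + 1) (σ₀ b) :=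
  Setoid.trans' _ (surgeredComponents_add_one hσ₀ hσ₁ ha hb (by omega) (by omega))
    (surgeredComponents_of_sigma0_apply_eq (surgeredSigma0_apply_add_five hb))

theorem surgeredComponents_add_one_left : surgeredComponents σ₀ σ₁ E a b (E + 1) a := by
  obtain rfl | hab := eq_or_ne a b
  · exact surgeredComponents_add_one_right hσ₀ hσ₁ ha hb
  · exact Setoid.trans' _ (surgeredComponents_add_one hσ₀ hσ₁ ha hb (by omega) (by omega))
      (Setoid.symm' _ <|
        surgeredComponents_of_sigma0_apply_eq (surgeredSigma0_apply_left hσ₀ ha hb hab))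

theorem surgeredComponents_add_one_sigma0_left :
    surgeredComponents σ₀ σ₁ E a b (E + 1) (σ₀ a) := by
  obtain rfl | hab := eq_or_ne a b
  · exact surgeredComponents_add_one_sigma0_right hσ₀ hσ₁ ha hb
  · exact Setoid.trans' _ (surgeredComponents_add_one hσ₀ hσ₁ ha hb (by omega) (by omega))
      (surgeredComponents_of_sigma0_apply_eq (surgeredSigma0_apply_add_four hb hab))

theorem surgeredComponents_sigma0_apply (x : ℕ) : surgeredComponents σ₀ σ₁ E a b x (σ₀ x) := by
  obtain hx | hx := lt_or_ge E x
  · rw [hσ₀ x hx]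
  obtain rfl | hxa := eq_or_ne x a
  · exact Setoid.trans' _ (Setoid.symm' _ (surgeredComponents_add_one_left hσ₀ hσ₁ hx hb))
      (surgeredComponents_add_one_sigma0_left hσ₀ hσ₁ hx hb)
  obtain rfl | hxb := eq_or_ne x b
  · exact Setoid.trans' _ (Setoid.symm' _ (surgeredComponents_add_one_right hσ₀ hσ₁ ha hx))
      (surgeredComponents_add_one_sigma0_right hσ₀ hσ₁ ha hx)
  exact surgeredComponents_of_sigma0_apply_eq (surgeredSigma0_apply_of_ne hx hxa hxb)

theorem edgeComponents_le_surgeredComponents :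
    edgeComponents σ₀ σ₁ ≤ surgeredComponents σ₀ σ₁ E a b :=
  edgeComponents_le (surgeredComponents_sigma0_apply hσ₀ hσ₁ ha hb)
    (surgeredComponents_sigma1_apply hσ₁)

end Surgery

theorem surgery_preserves_transitivity_general {E : ℕ} {σ₀ σ₁ : Perm ℕ}
    (hσ₀ : ∀ x, E < x → σ₀ x = x) (hσ₁ : ∀ x, E < x → σ₁ x = x) {a b : ℕ}
    (ha : a ∈ Finset.Icc 1 E) (hb : b ∈ Finset.Icc 1 E)
    (htrans : ∀ x ∈ Finset.Icc 1 E, ∀ y ∈ Finset.Icc 1 E,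
      ∃ π ∈ Subgroup.closure {σ₀, σ₁}, π x = y) :
    ∀ x ∈ Finset.Icc 1 (E + 8), ∀ y ∈ Finset.Icc 1 (E + 8),
      ∃ π ∈ Subgroup.closure {surgeredSigma0 σ₀ E a b, surgeredSigma1 σ₁ E}, π x = y := by
  have haE : a ≤ E := (Finset.mem_Icc.1 ha).2
  have hbE : b ≤ E := (Finset.mem_Icc.1 hb).2
  have connected_to_left : ∀ x ∈ Finset.Icc 1 (E + 8), surgeredComponents σ₀ σ₁ E a b a x := by
    intro x hx
    obtain ⟨hx1, hx8⟩ := Finset.mem_Icc.1 hx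
    obtain hxE | hxE := lt_or_ge E x
    · exact Setoid.trans' _ (Setoid.symm' _ (surgeredComponents_add_one_left hσ₀ hσ₁ haE hbE))
        (surgeredComponents_add_one hσ₀ hσ₁ haE hbE hxE hx8)
    · exact edgeComponents_le_surgeredComponents hσ₀ hσ₁ haE hbE
        (edgeComponents_iff.2 (htrans a ha x (Finset.mem_Icc.2 ⟨hx1, hxE⟩)))
  exact fun x hx y hy => edgeComponents_iff.1 <|
    Setoid.trans' _ (Setoid.symm' _ (connected_to_left x hx)) (connected_to_left y hy)

/-- If the subgroup generated by σ₀ and σ₁ acts transitively on {1,…,E}, then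
the subgroup generated by the surgered pair σ̃₀, σ̃₁ acts transitively on
{1,…,E+8}: the surgered dessin is again connected. -/
theorem surgery_preserves_transitivity
    (E : ℕ) (hE : 1 ≤ E) (σ₀ σ₁ : Equiv.Perm ℕ)
    (hs0 : ∀ x : ℕ, σ₀ x ≠ x → x ∈ Finset.Icc 1 E)
    (hs1 : ∀ x : ℕ, σ₁ x ≠ x → x ∈ Finset.Icc 1 E)
    (a b : ℕ) (ha : a ∈ Finset.Icc 1 E) (hb : b ∈ Finset.Icc 1 E)
    (hab : a ≠ b) (hσa : σ₀ a = b) (hσb : σ₀ b = a)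
    (htrans : ∀ x ∈ Finset.Icc 1 E, ∀ y ∈ Finset.Icc 1 E,
      ∃ π ∈ Subgroup.closure ({σ₀, σ₁} : Set (Equiv.Perm ℕ)), π x = y) :
    ∀ x ∈ Finset.Icc 1 (E + 8), ∀ y ∈ Finset.Icc 1 (E + 8),
      ∃ π ∈ Subgroup.closure
        ({surgeredSigma0 σ₀ E a b, surgeredSigma1 σ₁ E} : Set (Equiv.Perm ℕ)),
        π x = y :=
  surgery_preserves_transitivity_general (fun _ => apply_eq_self_of_support_Icc hs0)
    (fun _ => apply_eq_self_of_support_Icc hs1) ha hb htrans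
end
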